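/- arXiv:1104.1647 — 8 statements merged into one kernel-verified Lean document; each statement's English description precedes it below -/
import Mathlib

section
/- Let V and W be n-dimensional real vector spaces, A : V → W a linear bijection, and F a Minkowski norm on W. Define the pullback Minkowski norm A*F on V by (A*F)(ξ) = F(A(ξ)). Then the Binet–Legendre scalar products satisfy g_{A*F}(ξ,η) = g_F(A(ξ), A(η)) for all ξ, η ∈ V; equivalently, on dual spaces, g*_{A*F}(θ,θ) = g*_F(θ∘A⁻¹, θ∘A⁻¹) for every linear functional θ on V. -/
open MeasureTheory

/-- A Minkowski norm on a real topological vector space: continuous, nonnegative,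
positively homogeneous, subadditive, and vanishing only at `0`. -/
def IsMinkowskiNorm {V : Type*} [AddCommGroup V] [Module ℝ V] [TopologicalSpace V]
    (F : V → ℝ) : Prop :=
  Continuous F ∧ (∀ ξ, 0 ≤ F ξ) ∧ (∀ c : ℝ, 0 ≤ c → ∀ ξ, F (c • ξ) = c * F ξ) ∧
    (∀ ξ η, F (ξ + η) ≤ F ξ + F η) ∧ ∀ ξ, F ξ = 0 → ξ = 0

/-- The Binet–Legendre dual scalar product of `F` (with respect to the measure `μ`,
on a space of dimension `n`), evaluated on two linear functionals:
`g*_F(θ,φ) = ((n+2)/μ(Ω)) ∫_Ω θ(η)·φ(η) dμ(η)` where `Ω = {ξ | F ξ < 1}`. -/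
noncomputable def BLdual {V : Type*} [AddCommGroup V] [Module ℝ V] [MeasurableSpace V]
    (n : ℕ) (μ : Measure V) (F : V → ℝ) (θ φ : V →ₗ[ℝ] ℝ) : ℝ :=
  ((n + 2 : ℝ) / (μ {ξ | F ξ < 1}).toReal) * ∫ η in {ξ | F ξ < 1}, θ η * φ η ∂μ

/-- `g` is the Binet–Legendre scalar product of `F`: the bilinear form on `V` dual to
the Binet–Legendre dual scalar product `g*_F` on `V*`, i.e. for every `ξ` the functional
`g(ξ,·)` is the flat `ξ^♭` characterized by `g*_F(ξ^♭, θ) = θ(ξ)` for all `θ`. -/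
def IsBLMetric {V : Type*} [AddCommGroup V] [Module ℝ V] [MeasurableSpace V]
    (n : ℕ) (μ : Measure V) (F : V → ℝ) (g : V →ₗ[ℝ] V →ₗ[ℝ] ℝ) : Prop :=
  ∀ ξ : V, ∀ θ : V →ₗ[ℝ] ℝ, BLdual n μ F (g ξ) θ = θ ξ

theorem BLdual_comm {V : Type*} [AddCommGroup V] [Module ℝ V] [MeasurableSpace V]
    (n : ℕ) (μ : Measure V) (F : V → ℝ) (θ φ : V →ₗ[ℝ] ℝ) :
    BLdual n μ F θ φ = BLdual n μ F φ θ := by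
  simp only [BLdual, mul_comm (θ _)]

/-- Two Binet–Legendre metrics of the same function are transposes of each other. -/
theorem IsBLMetric.apply_eq_apply_swap {V : Type*} [AddCommGroup V] [Module ℝ V]
    [MeasurableSpace V] {n : ℕ} {μ : Measure V} {F : V → ℝ} {g h : V →ₗ[ℝ] V →ₗ[ℝ] ℝ}
    (hg : IsBLMetric n μ F g) (hh : IsBLMetric n μ F h) (ξ η : V) : g ξ η = h η ξ := by
  rw [← hh η (g ξ), BLdual_comm, hg ξ (h η)]

theorem IsBLMetric.unique {V : Type*} [AddCommGroup V] [Module ℝ V]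
    [MeasurableSpace V] {n : ℕ} {μ : Measure V} {F : V → ℝ} {g h : V →ₗ[ℝ] V →ₗ[ℝ] ℝ}
    (hg : IsBLMetric n μ F g) (hh : IsBLMetric n μ F h) : g = h := by
  ext ξ η
  rw [hg.apply_eq_apply_swap hh, hh.apply_eq_apply_swap hh]

/-- The Binet–Legendre dual scalar product does not depend on the scaling of the measure. -/
theorem BLdual_smul_measure {V : Type*} [AddCommGroup V] [Module ℝ V] [MeasurableSpace V]
    (n : ℕ) (μ : Measure V) (F : V → ℝ) (θ φ : V →ₗ[ℝ] ℝ) {c : ENNReal}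
    (hc₀ : c ≠ 0) (hc : c ≠ ⊤) :
    BLdual n (c • μ) F θ φ = BLdual n μ F θ φ := by
  have hc' : c.toReal ≠ 0 := (ENNReal.toReal_pos hc₀ hc).ne'
  simp only [BLdual, Measure.restrict_smul, integral_smul_measure, Measure.smul_apply,
    smul_eq_mul, ENNReal.toReal_mul]
  rw [← mul_assoc, div_mul_eq_mul_div, mul_comm (n + 2 : ℝ), mul_div_mul_left _ _ hc']

theorem BLdual_map_measure {V W : Type*} [AddCommGroup V] [Module ℝ V]
    [MeasurableSpace V] [AddCommGroup W] [Module ℝ W] [MeasurableSpace W]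
    (n : ℕ) (μ : Measure V) (F : W → ℝ) (A : V ≃ₗ[ℝ] W) (hA : MeasurableEmbedding A)
    (θ φ : W →ₗ[ℝ] ℝ) :
    BLdual n (μ.map A) F θ φ =
      BLdual n μ (fun ξ => F (A ξ)) (θ ∘ₗ A.toLinearMap) (φ ∘ₗ A.toLinearMap) := by
  simp only [BLdual, hA.setIntegral_map, hA.map_apply]
  rfl

/-- The Binet–Legendre dual scalar product is natural under linear bijections. -/
theorem BLdual_comp_linearEquiv {V W : Type*}
    [NormedAddCommGroup V] [NormedSpace ℝ V] [FiniteDimensional ℝ V]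
    [MeasurableSpace V] [BorelSpace V]
    [NormedAddCommGroup W] [NormedSpace ℝ W] [FiniteDimensional ℝ W]
    [MeasurableSpace W] [BorelSpace W]
    (n : ℕ) (μV : Measure V) [μV.IsAddHaarMeasure] (μW : Measure W) [μW.IsAddHaarMeasure]
    (F : W → ℝ) (A : V ≃ₗ[ℝ] W) (θ φ : W →ₗ[ℝ] ℝ) :
    BLdual n μV (fun ξ => F (A ξ)) (θ ∘ₗ A.toLinearMap) (φ ∘ₗ A.toLinearMap) =
      BLdual n μW F θ φ := by
  have hA : MeasurableEmbedding A :=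
    A.toContinuousLinearEquiv.toHomeomorph.measurableEmbedding
  have hmap : (μV.map A).IsAddHaarMeasure :=
    A.toContinuousLinearEquiv.isAddHaarMeasure_map μV
  have h : μV.map A = (Measure.addHaarScalarFactor (μV.map A) μW : ENNReal) • μW :=
    Measure.isAddLeftInvariant_eq_smul _ _
  have hc₀ : (Measure.addHaarScalarFactor (μV.map A) μW : ENNReal) ≠ 0 :=
    ENNReal.coe_ne_zero.2 (Measure.addHaarScalarFactor_pos_of_isAddHaarMeasure _ _).ne'
  rw [← BLdual_map_measure n μV F A hA, h,
    BLdual_smul_measure n μW F θ φ hc₀ ENNReal.coe_ne_top]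

/-- Naturality of the Binet–Legendre metric under linear bijections: for a linear
bijection `A : V → W` and a Minkowski norm `F` on `W`, the Binet–Legendre scalar
products satisfy `g_{A*F}(ξ,η) = g_F(Aξ, Aη)`. -/
theorem statement1 (n : ℕ)
    (V W : Type*) [NormedAddCommGroup V] [NormedSpace ℝ V] [FiniteDimensional ℝ V]
    [MeasurableSpace V] [BorelSpace V]
    [NormedAddCommGroup W] [NormedSpace ℝ W] [FiniteDimensional ℝ W]
    [MeasurableSpace W] [BorelSpace W]
    (hdimV : Module.finrank ℝ V = n) (hdimW : Module.finrank ℝ W = n)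
    (μV : Measure V) [μV.IsAddHaarMeasure] (μW : Measure W) [μW.IsAddHaarMeasure]
    (F : W → ℝ) (hF : IsMinkowskiNorm F)
    (A : V ≃ₗ[ℝ] W)
    (gW : W →ₗ[ℝ] W →ₗ[ℝ] ℝ) (hgW : IsBLMetric n μW F gW)
    (gV : V →ₗ[ℝ] V →ₗ[ℝ] ℝ) (hgV : IsBLMetric n μV (fun ξ => F (A ξ)) gV) :
    ∀ ξ η : V, gV ξ η = gW (A ξ) (A η) := by
  have hpull : IsBLMetric n μV (fun ξ => F (A ξ)) (gW.compl₁₂ A.toLinearMap A.toLinearMap) := by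
    intro ξ θ
    have key := BLdual_comp_linearEquiv n μV μW F A (gW (A ξ)) (θ ∘ₗ A.symm.toLinearMap)
    rw [hgW] at key
    have hθ : (θ ∘ₗ A.symm.toLinearMap) ∘ₗ A.toLinearMap = θ := by ext; simp
    rw [hθ, LinearMap.comp_apply, LinearEquiv.coe_coe, LinearEquiv.symm_apply_apply] at key
    exact key
  intro ξ η
  rw [hgV.unique hpull]
  rfl
end

section
/- Liouville theorem for Minkowski spaces: let n ≥ 2 and let V₁, V₂ be n-dimensional real vector spaces equipped with Minkowski norms F₁, F₂ respectively, neither of which is Euclidean (i.e., for i = 1,2 there is no inner product g on V_i with F_i(ξ) = √g(ξ,ξ) for all ξ). Let U₁ ⊆ V₁ and U₂ ⊆ V₂ be nonempty open connected sets and f : U₁ → U₂ a C¹ diffeomorphism that is conformal, i.e., there is a function λ : U₁ → (0,∞) with F₂(df_x(ξ)) = λ(x)·F₁(ξ) for all x ∈ U₁ and ξ ∈ V₁. Then there exist a linear bijection L : V₁ → V₂ with F₂(L(ξ)) = F₁(ξ) for all ξ (so (V₁,F₁) and (V₂,F₂) are linearly isometric), a constant c > 0, and a vector b ∈ V₂,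 such that f(x) = c·L(x) + b for all x ∈ U₁; that is, f is the restriction of a similarity. -/
/-- A Minkowski norm is Euclidean if it is induced by an inner product:
`F(ξ) = √g(ξ,ξ)` for some symmetric positive definite bilinear form `g`. -/
def IsEuclideanNorm {V : Type*} [AddCommGroup V] [Module ℝ V]
    (F : V → ℝ) : Prop :=
  ∃ g : V →ₗ[ℝ] V →ₗ[ℝ] ℝ, (∀ ξ η, g ξ η = g η ξ) ∧ (∀ ξ, ξ ≠ 0 → 0 < g ξ ξ) ∧
    ∀ ξ, F ξ = Real.sqrt (g ξ ξ)

open MeasureTheory Filter Topology Set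
open scoped RealInnerProductSpace

section Norms

variable {E : Type*} [NormedAddCommGroup E] [InnerProductSpace ℝ E]

/-- A Minkowski norm whose unit sphere is supported at each of its points by the hyperplane
orthogonal to the radius is a multiple of the norm of the ambient inner product. -/
theorem IsMinkowskiNorm.isEuclideanNorm_of_radial {F : E → ℝ} (hF : IsMinkowskiNorm F)
    (hE : 1 < Module.rank ℝ E)
    (h : ∀ ξ η : E, F ξ * ⟪ξ, η⟫ ≤ F η * ‖ξ‖ ^ 2) : IsEuclideanNorm F := by
  obtain ⟨hc, h0, hs, ha, hz⟩ := hF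
  set ρ : E → ℝ := fun ξ => F ξ / ‖ξ‖ with hρ
  have hρ0 : ∀ ξ, 0 ≤ ρ ξ := fun ξ => div_nonneg (h0 ξ) (norm_nonneg _)
  have key : ∀ ξ η : E, ξ ≠ 0 → η ≠ 0 →
      ρ ξ - ρ η ≤ ρ ξ * (‖‖ξ‖⁻¹ • ξ - ‖η‖⁻¹ • η‖ ^ 2 / 2) := by
    intro ξ η hξ hη
    have hξ' := norm_pos_iff.2 hξ
    have hη' := norm_pos_iff.2 hη
    have e1 : ‖‖ξ‖⁻¹ • ξ - ‖η‖⁻¹ • η‖ ^ 2 = 2 - 2 * (⟪ξ, η⟫ / (‖ξ‖ * ‖η‖)) := by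
      rw [norm_sub_sq_real, norm_smul, norm_smul, real_inner_smul_left, real_inner_smul_right]
      simp only [norm_inv, norm_norm]
      field_simp
      ring
    have e2 : ρ ξ * (⟪ξ, η⟫ / (‖ξ‖ * ‖η‖)) ≤ ρ η := by
      simp only [hρ]
      rw [div_mul_div_comm, div_le_div_iff₀ (by positivity) hη']
      nlinarith [h ξ η]
    rw [e1]
    linarith
  have hderiv : ∀ ξ : E, ξ ≠ 0 → HasFDerivAt ρ (0 : E →L[ℝ] ℝ) ξ := by
    intro ξ hξ
    have hn : DifferentiableAt ℝ (fun η : E => ‖η‖⁻¹ • η) ξ := by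
      have : DifferentiableAt ℝ (fun η : E => ‖η‖) ξ := differentiableAt_id.norm ℝ hξ
      exact (this.inv (norm_ne_zero_iff.2 hξ)).smul differentiableAt_id
    have hO := hn.hasFDerivAt.isBigO_sub
    have hρc : ContinuousAt ρ ξ :=
      hc.continuousAt.div continuous_norm.continuousAt (norm_ne_zero_iff.2 hξ)
    have hbd : ∀ᶠ η in 𝓝 ξ, ρ η < ρ ξ + 1 := hρc.eventually_lt_const (by linarith)
    have hne : ∀ᶠ η in 𝓝 ξ, η ≠ 0 := isOpen_ne.mem_nhds hξ
    have hO2 : (fun η => ρ η - ρ ξ) =O[𝓝 ξ] fun η => ‖η - ξ‖ ^ 2 := by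
      have h1 : (fun η => ρ η - ρ ξ) =O[𝓝 ξ]
          fun η => ‖‖η‖⁻¹ • η - ‖ξ‖⁻¹ • ξ‖ ^ 2 := by
        refine Asymptotics.IsBigO.of_bound ((ρ ξ + 1) / 2) ?_
        filter_upwards [hbd, hne] with η h1 h2
        have k1 := key η ξ h2 hξ
        have k2 := key ξ η hξ h2
        rw [norm_sub_rev] at k2
        have := hρ0 ξ
        have := hρ0 η
        set T := ‖‖η‖⁻¹ • η - ‖ξ‖⁻¹ • ξ‖ ^ 2
        have hT : 0 ≤ T := sq_nonneg _
        rw [Real.norm_eq_abs, Real.norm_eq_abs, abs_of_nonneg hT, abs_le]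
        constructor <;> nlinarith
      exact h1.trans (hO.norm_norm.pow 2)
    rw [hasFDerivAt_iff_isLittleO]
    simp only [zero_apply, sub_zero]
    refine hO2.trans_isLittleO ?_
    have ht : Tendsto (fun η => ‖η - ξ‖) (𝓝 ξ) (𝓝 0) := tendsto_norm_sub_self ξ
    have : (fun η => ‖η - ξ‖ * ‖η - ξ‖) =o[𝓝 ξ] fun η => (1 : ℝ) * ‖η - ξ‖ :=
      ((Asymptotics.isLittleO_one_iff ℝ).2 ht).mul_isBigO (Asymptotics.isBigO_refl _ _)
    simpa [sq] using this
  have : Nontrivial E := by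
    rw [← rank_pos_iff_nontrivial (R := ℝ)]
    exact lt_trans one_pos hE
  obtain ⟨e, he⟩ := exists_ne (0 : E)
  have hconst : ∀ ξ : E, ξ ≠ 0 → ρ ξ = ρ e := by
    intro ξ hξ
    refine isOpen_compl_singleton.is_const_of_fderiv_eq_zero (𝕜 := ℝ) (s := {0}ᶜ)
      (isConnected_compl_singleton_of_one_lt_rank hE 0).isPreconnected ?_ ?_ hξ he
    · intro x hx
      exact (hderiv x hx).differentiableAt.differentiableWithinAt
    · intro x hx
      exact (hderiv x hx).fderiv
  have hpos : 0 < ρ e := by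
    refine div_pos (lt_of_le_of_ne (h0 e) fun h => he (hz e h.symm)) (norm_pos_iff.2 he)
  refine ⟨(ρ e ^ 2) • innerₗ E, ?_, ?_, ?_⟩
  · intro ξ η
    simp [real_inner_comm]
  · intro ξ hξ
    have := norm_pos_iff.2 hξ
    simp only [LinearMap.smul_apply, innerₗ_apply_apply, real_inner_self_eq_norm_sq, smul_eq_mul]
    positivity
  · intro ξ
    simp only [LinearMap.smul_apply, innerₗ_apply_apply, real_inner_self_eq_norm_sq, smul_eq_mul]
    rw [← mul_pow, Real.sqrt_sq (by positivity)]
    rcases eq_or_ne ξ 0 with rfl | hξ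
    · simpa using hs 0 le_rfl 0
    · rw [← hconst ξ hξ]
      simp only [hρ]
      rw [div_mul_cancel₀ _ (norm_ne_zero_iff.2 hξ)]

/-- A Minkowski norm has a supporting functional at every vector. -/
theorem IsMinkowskiNorm.exists_subgradient [FiniteDimensional ℝ E] {F : E → ℝ}
    (hF : IsMinkowskiNorm F) (ξ : E) : ∃ p : E, (∀ η, ⟪p, η⟫ ≤ F η) ∧ ⟪p, ξ⟫ = F ξ := by
  obtain ⟨hc, h0, hs, ha, hz⟩ := hF
  have hF0 : F 0 = 0 := by simpa using hs 0 le_rfl 0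
  rcases eq_or_ne ξ 0 with rfl | hξ
  · exact ⟨0, fun η => by simpa using h0 η, by simp [hF0]⟩
  obtain ⟨g, hg1, hg2⟩ := exists_extension_of_le_sublinear
    (LinearPMap.mkSpanSingleton (K := ℝ) ξ (F ξ) hξ) F (fun c hc => hs c hc.le) ha (by
      rintro ⟨x, hx⟩
      obtain ⟨c, rfl⟩ := Submodule.mem_span_singleton.1 hx
      have hval : (LinearPMap.mkSpanSingleton (K := ℝ) ξ (F ξ) hξ) ⟨c • ξ, hx⟩ = c • F ξ :=
        LinearPMap.mkSpanSingleton'_apply _ _ _ _ _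
      rw [hval, smul_eq_mul]
      rcases le_total 0 c with hc | hc
      · exact (hs c hc ξ).ge
      · have := mul_nonneg_of_nonpos_of_nonpos hc (neg_nonpos.2 (h0 ξ))
        linarith [h0 (c • ξ)])
  refine ⟨(InnerProductSpace.toDual ℝ E).symm (LinearMap.toContinuousLinearMap g), ?_, ?_⟩
  · intro η
    simpa using hg2 η
  · have := hg1 ⟨ξ, Submodule.mem_span_singleton_self ξ⟩
    simp only [InnerProductSpace.toDual_symm_apply, LinearMap.coe_toContinuousLinearMap']
    rw [this, LinearPMap.mkSpanSingleton_apply]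

/-- The rigidity of the Euclidean norm among Minkowski norms used to exclude non-constant
conformal factors. -/
theorem IsMinkowskiNorm.eq_zero_of_not_isEuclideanNorm [FiniteDimensional ℝ E] {F : E → ℝ}
    (hF : IsMinkowskiNorm F) (hne : ¬ IsEuclideanNorm F) (hE : 1 < Module.rank ℝ E)
    (α : E →ₗ[ℝ] ℝ)
    (h : ∀ ξ p : E, (∀ η, ⟪p, η⟫ ≤ F η) → ⟪p, ξ⟫ = F ξ → ∀ v, α ξ * ⟪v, p⟫ ≤ α p * ⟪v, ξ⟫) :
    α = 0 := by
  by_contra hα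
  obtain ⟨z, hz⟩ : ∃ z, α z ≠ 0 := by
    by_contra! hcon
    exact hα (LinearMap.ext hcon)
  refine hne (hF.isEuclideanNorm_of_radial hE ?_)
  have gen : ∀ ξ η : E, α ξ ≠ 0 → F ξ * ⟪ξ, η⟫ ≤ F η * ‖ξ‖ ^ 2 := by
    intro ξ η hξ
    obtain ⟨p, hp1, hp2⟩ := hF.exists_subgradient ξ
    have h1 : ∀ v, ⟪v, α ξ • p - α p • ξ⟫ ≤ 0 := by
      intro v
      rw [inner_sub_right, real_inner_smul_right, real_inner_smul_right]
      linarith [h ξ p hp1 hp2 v]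
    have h2 : α ξ • p - α p • ξ = 0 := by
      have := h1 (α ξ • p - α p • ξ)
      exact inner_self_eq_zero.1 (le_antisymm this real_inner_self_nonneg)
    have h3 : p = (α p / α ξ) • ξ := by
      rw [div_eq_inv_mul, mul_smul, ← sub_eq_zero.1 h2, smul_smul, inv_mul_cancel₀ hξ, one_smul]
    set c := α p / α ξ
    have h4 : F ξ = c * ‖ξ‖ ^ 2 := by
      rw [← hp2, h3, real_inner_smul_left, real_inner_self_eq_norm_sq]
    have h5 := hp1 η
    rw [h3, real_inner_smul_left] at h5
    rw [h4]
    nlinarith [sq_nonneg ‖ξ‖]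
  intro ξ η
  by_cases hξ : α ξ = 0
  · have hc := hF.1
    have hcont : Continuous fun t : ℝ =>
        F η * ‖ξ + t • z‖ ^ 2 - F (ξ + t • z) * ⟪ξ + t • z, η⟫ := by fun_prop
    have hlim : Tendsto (fun t : ℝ =>
        F η * ‖ξ + t • z‖ ^ 2 - F (ξ + t • z) * ⟪ξ + t • z, η⟫) (𝓝[≠] 0)
        (𝓝 (F η * ‖ξ + (0 : ℝ) • z‖ ^ 2 - F (ξ + (0 : ℝ) • z) * ⟪ξ + (0 : ℝ) • z, η⟫)) :=
      hcont.continuousAt.tendsto.mono_left nhdsWithin_le_nhds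
    have := ge_of_tendsto hlim (b := 0) (by
      filter_upwards [self_mem_nhdsWithin] with t ht
      have := gen (ξ + t • z) η (by simpa [hξ] using ⟨ht, hz⟩)
      linarith)
    simp only [zero_smul, add_zero] at this
    linarith
  · exact gen ξ η hξ

end Norms

section DifferenceQuotients

variable {E : Type*} [NormedAddCommGroup E] [InnerProductSpace ℝ E]

theorem norm_pow_smul_sub_le (k : ℕ) {M : ℝ} {a b : E} (ha : ‖a‖ ≤ M) (hb : ‖b‖ ≤ M) :
    ‖‖a‖ ^ k • a - ‖b‖ ^ k • b‖ ≤ (k + 1) * M ^ k * ‖a - b‖ := by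
  have hM : 0 ≤ M := (norm_nonneg a).trans ha
  have h1 : ‖a‖ ^ k • a - ‖b‖ ^ k • b = ‖a‖ ^ k • (a - b) + (‖a‖ ^ k - ‖b‖ ^ k) • b := by
    rw [smul_sub, sub_smul]; abel
  have h2 : |‖a‖ ^ k - ‖b‖ ^ k| ≤ ‖a - b‖ * k * M ^ (k - 1) := by
    refine (abs_pow_sub_pow_le ..).trans ?_
    gcongr
    · exact abs_norm_sub_norm_le a b
    · simp [ha, hb]
  have h3 : (k : ℝ) * M ^ (k - 1) * M = k * M ^ k := by
    rcases k with _ | k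
    · simp
    · simp [pow_succ, mul_assoc]
  calc ‖‖a‖ ^ k • a - ‖b‖ ^ k • b‖
      ≤ ‖a‖ ^ k * ‖a - b‖ + |‖a‖ ^ k - ‖b‖ ^ k| * ‖b‖ := by
        rw [h1]
        refine (norm_add_le _ _).trans ?_
        rw [norm_smul, norm_smul, norm_pow, norm_norm, Real.norm_eq_abs]
    _ ≤ M ^ k * ‖a - b‖ + ‖a - b‖ * k * M ^ (k - 1) * M := by gcongr
    _ = (k + 1) * M ^ k * ‖a - b‖ := by
        linear_combination ‖a - b‖ * h3

theorem le_inner_norm_pow_smul_sub (k : ℕ) {m : ℝ} (hm : 0 ≤ m) {a b : E} (ha : m ≤ ‖a‖)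
    (hb : m ≤ ‖b‖) : m ^ k * ‖a - b‖ ^ 2 ≤ ⟪‖a‖ ^ k • a - ‖b‖ ^ k • b, a - b⟫ := by
  have h1 : ⟪‖a‖ ^ k • a - ‖b‖ ^ k • b, a - b⟫ = (‖a‖ ^ k + ‖b‖ ^ k) / 2 * ‖a - b‖ ^ 2 +
      (‖a‖ ^ k - ‖b‖ ^ k) * (‖a‖ ^ 2 - ‖b‖ ^ 2) / 2 := by
    rw [norm_sub_sq_real]
    simp only [inner_sub_left, inner_sub_right, real_inner_smul_left, real_inner_self_eq_norm_sq]
    rw [real_inner_comm a b]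
    ring
  have h2 : 0 ≤ (‖a‖ ^ k - ‖b‖ ^ k) * (‖a‖ ^ 2 - ‖b‖ ^ 2) := by
    rcases le_total ‖a‖ ‖b‖ with h | h
    · refine mul_nonneg_of_nonpos_of_nonpos ?_ ?_ <;> rw [sub_nonpos] <;> gcongr
    · refine mul_nonneg ?_ ?_ <;> rw [sub_nonneg] <;> gcongr
  have h3 : m ^ k ≤ ‖a‖ ^ k := by gcongr
  have h4 : m ^ k ≤ ‖b‖ ^ k := by gcongr
  rw [h1]
  nlinarith [sq_nonneg ‖a - b‖]

theorem le_inner_norm_pow_smul_sub_add (k : ℕ) {m M : ℝ} (hm : 0 < m) {a b : E}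
    (ha : m ≤ ‖a‖) (hb : m ≤ ‖b‖) (ha' : ‖a‖ ≤ M) (hb' : ‖b‖ ≤ M) (d : E) (s t : ℝ) :
    m ^ k / 2 * (s ^ 2 * ‖a - b‖ ^ 2) -
        2 * ((k + 1) * M ^ k) ^ 2 / m ^ k * (t ^ 2 * ‖d‖ ^ 2) ≤
      ⟪‖a‖ ^ k • a - ‖b‖ ^ k • b, s ^ 2 • (a - b) + (2 * s * t) • d⟫ := by
  set z := ‖a‖ ^ k • a - ‖b‖ ^ k • b with hz
  set N := (k + 1) * M ^ k with hN
  have h1 : ‖z‖ ≤ N * ‖a - b‖ := norm_pow_smul_sub_le k ha' hb'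
  have h2 := le_inner_norm_pow_smul_sub k hm.le ha hb
  have hmk : 0 < m ^ k := by positivity
  have hM : 0 ≤ M := (norm_nonneg a).trans ha'
  have hN0 : 0 ≤ N := by positivity
  have h3 : |2 * s * t * ⟪z, d⟫| ≤ 2 * (|s| * ‖a - b‖) * (N * |t| * ‖d‖) := by
    rw [abs_mul, abs_mul, abs_mul, abs_two]
    calc 2 * |s| * |t| * |⟪z, d⟫| ≤ 2 * |s| * |t| * (N * ‖a - b‖ * ‖d‖) := by
          gcongr
          exact (abs_real_inner_le_norm z d).trans (by gcongr)
      _ = _ := by ring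
  have h4 : 2 * (|s| * ‖a - b‖) * (N * |t| * ‖d‖) ≤
      m ^ k / 2 * (s ^ 2 * ‖a - b‖ ^ 2) + 2 * N ^ 2 / m ^ k * (t ^ 2 * ‖d‖ ^ 2) := by
    have : m ^ k / 2 * (s ^ 2 * ‖a - b‖ ^ 2) + 2 * N ^ 2 / m ^ k * (t ^ 2 * ‖d‖ ^ 2) -
        2 * (|s| * ‖a - b‖) * (N * |t| * ‖d‖) =
        (m ^ k * (|s| * ‖a - b‖) - 2 * (N * |t| * ‖d‖)) ^ 2 / (2 * m ^ k) := by
      rw [← sq_abs s, ← sq_abs t]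
      field_simp
      ring
    have h5 : 0 ≤ (m ^ k * (|s| * ‖a - b‖) - 2 * (N * |t| * ‖d‖)) ^ 2 / (2 * m ^ k) := by
      positivity
    linarith
  rw [inner_add_right, real_inner_smul_right, real_inner_smul_right]
  have h6 := neg_abs_le (2 * s * t * ⟪z, d⟫)
  have h7 : s ^ 2 * (m ^ k * ‖a - b‖ ^ 2) ≤ s ^ 2 * ⟪z, a - b⟫ := by gcongr
  linarith

variable [FiniteDimensional ℝ E]

theorem exists_contDiff_cutoff {K Ω : Set E}
    (hK : IsCompact K) (hΩ : IsOpen Ω) (hKΩ : K ⊆ Ω) :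
    ∃ η : E → ℝ, ContDiff ℝ 1 η ∧ HasCompactSupport η ∧ tsupport η ⊆ Ω ∧
      (∀ᶠ x in 𝓝ˢ K, η x = 1) ∧ ∀ x, 0 ≤ η x := by
  obtain ⟨L, hL, hKL, hLΩ⟩ := exists_compact_between hK hΩ hKΩ
  obtain ⟨η, h1, h2, h3⟩ := exists_contMDiffMap_one_nhds_of_subset_interior (n := 1)
    (modelWithCornersSelf ℝ E) hK.isClosed hKL
  have hsupp : tsupport η ⊆ L :=
    closure_minimal (Function.support_subset_iff'.2 h2) hL.isClosed
  exact ⟨η, η.contMDiff.contDiff, hL.of_isClosed_subset (isClosed_tsupport _) hsupp,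
    hsupp.trans hLΩ, h1, fun x => (h3 x).1⟩

variable [MeasurableSpace E] [BorelSpace E]

/-- Interior `L²` estimate for difference quotients of the gradient of a weak solution of the
`(k + 2)`-Laplace equation with nonvanishing gradient. -/
theorem integral_norm_sub_sq_le {u : E → ℝ} {G : E → E} {Ω : Set E} {m : ℝ} (k : ℕ)
    (hu : ∀ x, HasFDerivAt u (innerSL ℝ (G x)) x) (hG : Continuous G) (hGs : HasCompactSupport G)
    (hΩ : IsOpen Ω) (hm : 0 < m) (hGm : ∀ x ∈ Ω, m ≤ ‖G x‖)
    (hweak : ∀ ψ : E → ℝ, ContDiff ℝ 1 ψ → HasCompactSupport ψ → tsupport ψ ⊆ Ω →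
      ∫ x, fderiv ℝ ψ x (‖G x‖ ^ k • G x) = 0)
    {φ : E → ℝ} (hφ : Continuous φ) (hφs : HasCompactSupport φ) (hφΩ : tsupport φ ⊆ Ω) (v : E) :
    ∃ C : ℝ, ∀ᶠ h : ℝ in 𝓝[>] 0, ∫ x, |φ x| * ‖G (x + h • v) - G x‖ ^ 2 ≤ C * h ^ 2 := by
  obtain ⟨η, hη, hηs, hηΩ, hη1, hη0⟩ := exists_contDiff_cutoff hφs hΩ hφΩ
  obtain ⟨M, hM⟩ := hGs.exists_bound_of_continuous hG
  obtain ⟨P, hP⟩ := hφs.exists_bound_of_continuous hφ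
  obtain ⟨δ, hδ, hδΩ⟩ := IsCompact.exists_cthickening_subset_open hηs hΩ hηΩ
  have hM0 : 0 ≤ M := (norm_nonneg _).trans (hM 0)
  have hP0 : 0 ≤ P := (norm_nonneg _).trans (hP 0)
  have hu1 : ContDiff ℝ 1 u := contDiff_one_iff_hasFDerivAt.2
    ⟨fun x => innerSL ℝ (G x), by fun_prop, hu⟩
  have hη' : Continuous (fderiv ℝ η) := hη.continuous_fderiv (by simp)
  set N : ℝ := (k + 1) * M ^ k with hN
  set Q : ℝ := ∫ x, ‖fderiv ℝ η x‖ ^ 2 with hQ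
  have hu_lip : ∀ x y, |u y - u x| ≤ M * ‖y - x‖ := by
    intro x y
    refine convex_univ.norm_image_sub_le_of_norm_hasFDerivWithin_le
      (fun z _ => (hu z).hasFDerivWithinAt) (fun z _ => ?_) (mem_univ x) (mem_univ y)
    rw [innerSL_apply_norm]
    exact hM z
  have hsmall : ∀ᶠ h : ℝ in 𝓝[>] 0, ‖h • v‖ ≤ δ := by
    have : Continuous fun h : ℝ => ‖h • v‖ := by fun_prop
    have h0 : Tendsto (fun h : ℝ => ‖h • v‖) (𝓝[>] 0) (𝓝 0) := by
      simpa using (this.tendsto 0).mono_left nhdsWithin_le_nhds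
    exact (h0.eventually_lt_const hδ).mono fun _ h => h.le
  refine ⟨P * (2 / m ^ k * (2 * N ^ 2 / m ^ k * ((M * ‖v‖) ^ 2 * Q))), ?_⟩
  filter_upwards [hsmall] with h hh
  set ψ : E → ℝ := fun x => η x ^ 2 * (u (x + h • v) - u x) with hψ
  have hψ1 : ContDiff ℝ 1 ψ := by fun_prop
  have hψη : tsupport ψ ⊆ tsupport η := by
    refine closure_mono fun x hx => ?_
    contrapose! hx
    simp [hψ, Function.notMem_support.1 hx]
  have hψs : HasCompactSupport ψ := hηs.of_isClosed_subset (isClosed_tsupport _) hψη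
  have hψ' : ∀ x w, fderiv ℝ ψ x w = η x ^ 2 * ⟪G (x + h • v) - G x, w⟫ +
      2 * η x * (u (x + h • v) - u x) * fderiv ℝ η x w := by
    intro x w
    have d1 : HasFDerivAt (fun x => u (x + h • v)) (innerSL ℝ (G (x + h • v))) x :=
      hasFDerivAt_comp_add_right (h • v) |>.2 (hu (x + h • v))
    have d2 : HasFDerivAt η (fderiv ℝ η x) x := (hη.differentiable (by simp) x).hasFDerivAt
    have d3 := (d2.pow 2).mul (d1.sub (hu x))
    rw [show ψ = (fun x => η x ^ 2) * ((fun x => u (x + h • v)) - u) from rfl, d3.fderiv]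
    simp [inner_sub_left]
    ring
  have hmem : ∀ x, η x ≠ 0 → x ∈ Ω ∧ x + h • v ∈ Ω := by
    intro x hx
    have hx' : x ∈ tsupport η := subset_tsupport _ hx
    refine ⟨hηΩ hx', hδΩ ?_⟩
    exact Metric.mem_cthickening_of_dist_le _ x _ _ hx' (by simpa [dist_eq_norm] using hh)
  have e1 : ∫ x, fderiv ℝ ψ x (‖G x‖ ^ k • G x) = 0 := hweak ψ hψ1 hψs (hψη.trans hηΩ)
  have e2 : ∫ x, fderiv ℝ ψ x (‖G (x + h • v)‖ ^ k • G (x + h • v)) = 0 := by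
    have hts : tsupport (fun x => ψ (x - h • v)) ⊆ Metric.cthickening δ (tsupport η) := by
      refine closure_minimal (fun x hx => ?_) Metric.isClosed_cthickening
      refine Metric.mem_cthickening_of_dist_le x (x - h • v) _ _
        (hψη (subset_tsupport _ hx)) ?_
      simpa [dist_eq_norm] using hh
    have := hweak (fun x => ψ (x - h • v)) (by fun_prop)
      ((hηs.cthickening (r := δ)).of_isClosed_subset (isClosed_tsupport _) hts) (hts.trans hδΩ)
    rw [← integral_add_right_eq_self _ (h • v)] at this
    simpa [fderiv_comp_sub] using this
  have hGc : Continuous fun x => ‖G x‖ ^ k • G x := by fun_prop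
  have hGhc : Continuous fun x => ‖G (x + h • v)‖ ^ k • G (x + h • v) := by fun_prop
  have hψ'c : Continuous (fderiv ℝ ψ) := hψ1.continuous_fderiv (by simp)
  have hψ's : HasCompactSupport (fderiv ℝ ψ) := hψs.fderiv ℝ
  have int : ∀ g : E → E, Continuous g → Integrable fun x => fderiv ℝ ψ x (g x) := by
    intro g hg
    refine (hψ'c.clm_apply hg).integrable_of_hasCompactSupport ?_
    exact hψ's.mono fun x hx => by
      contrapose! hx
      simp [Function.notMem_support.1 hx]
  have e3 : ∫ x, fderiv ℝ ψ x
      (‖G (x + h • v)‖ ^ k • G (x + h • v) - ‖G x‖ ^ k • G x) = 0 := by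
    simp only [map_sub]
    rw [integral_sub (int _ hGhc) (int _ hGc), e1, e2, sub_zero]
  have i1 : Integrable fun x => η x ^ 2 * ‖G (x + h • v) - G x‖ ^ 2 := by
    refine Continuous.integrable_of_hasCompactSupport (by fun_prop) ?_
    exact hηs.mono fun x hx => by
      contrapose! hx
      simp [Function.notMem_support.1 hx]
  have i2 : Integrable fun x => ‖fderiv ℝ η x‖ ^ 2 := by
    refine Continuous.integrable_of_hasCompactSupport (by fun_prop) ?_
    exact (hηs.fderiv ℝ).mono fun x hx => by
      contrapose! hx
      simp [Function.notMem_support.1 hx]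
  have pt : ∀ x, m ^ k / 2 * (η x ^ 2 * ‖G (x + h • v) - G x‖ ^ 2) -
      2 * N ^ 2 / m ^ k * ((M * ‖v‖ * h) ^ 2 * ‖fderiv ℝ η x‖ ^ 2) ≤
      fderiv ℝ ψ x (‖G (x + h • v)‖ ^ k • G (x + h • v) - ‖G x‖ ^ k • G x) := by
    intro x
    by_cases hx : η x = 0
    · rw [hψ', hx]
      simp only [ne_eq, OfNat.ofNat_ne_zero, not_false_eq_true, zero_pow, zero_mul, mul_zero,
        zero_sub, add_zero, Left.neg_nonpos_iff]
      positivity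
    obtain ⟨m1, m2⟩ := hmem x hx
    obtain ⟨d, hd⟩ := (InnerProductSpace.toDual ℝ E).surjective (fderiv ℝ η x)
    have hdn : ‖d‖ = ‖fderiv ℝ η x‖ := by rw [← hd, LinearIsometryEquiv.norm_map]
    have hdi : ∀ w, fderiv ℝ η x w = ⟪d, w⟫ := fun w => by
      rw [← hd, InnerProductSpace.toDual_apply_apply]
    have key := le_inner_norm_pow_smul_sub_add k hm (hGm _ m2) (hGm _ m1) (hM _) (hM _) d (η x)
      (u (x + h • v) - u x)
    rw [hψ', hdi, ← hdn, real_inner_comm, real_inner_comm _ d]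
    rw [inner_add_right, real_inner_smul_right, real_inner_smul_right] at key
    have ht : (u (x + h • v) - u x) ^ 2 ≤ (M * ‖v‖ * h) ^ 2 := by
      rw [sq_le_sq]
      refine (hu_lip x (x + h • v)).trans ?_
      rw [add_sub_cancel_left, norm_smul, abs_mul, abs_of_nonneg (by positivity : 0 ≤ M * ‖v‖),
        Real.norm_eq_abs]
      exact le_of_eq (by ring)
    have ht' : 2 * N ^ 2 / m ^ k * ((u (x + h • v) - u x) ^ 2 * ‖d‖ ^ 2) ≤
        2 * N ^ 2 / m ^ k * ((M * ‖v‖ * h) ^ 2 * ‖d‖ ^ 2) := by gcongr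
    linarith
  have main : m ^ k / 2 * ∫ x, η x ^ 2 * ‖G (x + h • v) - G x‖ ^ 2 ≤
      2 * N ^ 2 / m ^ k * ((M * ‖v‖ * h) ^ 2 * Q) := by
    have := integral_mono ((i1.const_mul (m ^ k / 2)).sub
      ((i2.const_mul ((M * ‖v‖ * h) ^ 2)).const_mul (2 * N ^ 2 / m ^ k)))
      (int _ (hGhc.sub hGc)) pt
    simp only [Pi.sub_apply] at this
    rw [e3, integral_sub (i1.const_mul _) ((i2.const_mul _).const_mul _), integral_const_mul,
      integral_const_mul, integral_const_mul] at this
    linarith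
  have hmk : 0 < m ^ k := by positivity
  calc ∫ x, |φ x| * ‖G (x + h • v) - G x‖ ^ 2
      ≤ ∫ x, P * (η x ^ 2 * ‖G (x + h • v) - G x‖ ^ 2) := by
        refine integral_mono ?_ (i1.const_mul P) ?_
        · refine Continuous.integrable_of_hasCompactSupport (by fun_prop) ?_
          exact hφs.mono fun x hx => by
            contrapose! hx
            simp [Function.notMem_support.1 hx]
        · intro x
          by_cases hx : φ x = 0
          · simp only [hx, abs_zero, zero_mul]
            positivity
          · have : η x = 1 := hη1.self_of_nhdsSet x (subset_tsupport _ hx)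
            simp only [this, one_pow, one_mul]
            gcongr
            exact hP x
    _ = P * (2 / m ^ k * (m ^ k / 2 * ∫ x, η x ^ 2 * ‖G (x + h • v) - G x‖ ^ 2)) := by
        rw [integral_const_mul]
        field_simp
    _ ≤ P * (2 / m ^ k * (2 * N ^ 2 / m ^ k * ((M * ‖v‖ * h) ^ 2 * Q))) := by gcongr
    _ = _ := by ring

end DifferenceQuotients

section Limits

theorem hasCompactSupport_fderiv_apply {E W : Type*} [NormedAddCommGroup E] [NormedSpace ℝ E]
    [NormedAddCommGroup W] [NormedSpace ℝ W] {f : E → W} (hfs : HasCompactSupport f) (v : E) :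
    HasCompactSupport fun x => fderiv ℝ f x v :=
  (hfs.fderiv ℝ).mono fun x hx => by
    contrapose! hx
    simp [Function.notMem_support.1 hx]

variable {E : Type*} [NormedAddCommGroup E] [InnerProductSpace ℝ E] [FiniteDimensional ℝ E]
  [MeasurableSpace E] [BorelSpace E] {W : Type*} [NormedAddCommGroup W] [InnerProductSpace ℝ W]

theorem integrable_inner_left {f χ : E → W} (hf : Continuous f) (hχ : Continuous χ)
    (hχs : HasCompactSupport χ) : Integrable fun x => ⟪f x, χ x⟫ := by
  refine (hf.inner hχ).integrable_of_hasCompactSupport (hχs.mono fun x hx => ?_)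
  contrapose! hx
  simp [Function.notMem_support.1 hx]

theorem tendsto_integral_inner_difference {f χ : E → W} (hf : ContDiff ℝ 1 f)
    (hfs : HasCompactSupport f) (hχ : Continuous χ) (hχs : HasCompactSupport χ) (v : E) :
    Tendsto (fun h : ℝ => h⁻¹ * ∫ x, ⟪f (x + h • v) - f x, χ x⟫) (𝓝[>] 0)
      (𝓝 (∫ x, ⟪fderiv ℝ f x v, χ x⟫)) := by
  obtain ⟨C, hC⟩ := hf.lipschitzWith_of_hasCompactSupport hfs (by simp)
  have hcf := hf.continuous
  have hlim : Tendsto (fun h : ℝ => ∫ x, ⟪h⁻¹ • (f (x + h • v) - f x), χ x⟫) (𝓝[>] 0)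
      (𝓝 (∫ x, ⟪fderiv ℝ f x v, χ x⟫)) := by
    refine tendsto_integral_filter_of_dominated_convergence (fun x => C * ‖v‖ * ‖χ x‖)
      ?_ ?_ ?_ ?_
    · refine Eventually.of_forall fun h => Continuous.aestronglyMeasurable ?_
      fun_prop
    · filter_upwards [self_mem_nhdsWithin] with h (hh : 0 < h)
      refine Eventually.of_forall fun x => ?_
      refine (norm_inner_le_norm _ _).trans ?_
      gcongr
      rw [norm_smul, norm_inv, Real.norm_of_nonneg hh.le, inv_mul_le_iff₀ hh]
      refine (hC.norm_sub_le _ _).trans ?_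
      rw [add_sub_cancel_left, norm_smul, Real.norm_of_nonneg hh.le]
      exact le_of_eq (by ring)
    · refine (Continuous.integrable_of_hasCompactSupport hχ.norm hχs.norm).const_mul _
    · refine Eventually.of_forall fun x => ?_
      have h1 := ((hf.differentiable (by simp) x).hasFDerivAt.hasLineDerivAt v).tendsto_slope_zero
      exact (h1.mono_left (nhdsWithin_mono _ fun y hy => ne_of_gt hy)).inner tendsto_const_nhds
  refine hlim.congr fun h => ?_
  simp only [real_inner_smul_left]
  rw [integral_const_mul]

theorem integral_inner_sub_comm {g ψ : E → W} (hg : Continuous g) (hgs : HasCompactSupport g)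
    (hψ : Continuous ψ) (hψs : HasCompactSupport ψ) (v : E) :
    ∫ x, ⟪g (x + v) - g x, ψ x⟫ = ∫ x, ⟪ψ (x - v) - ψ x, g x⟫ := by
  simp only [inner_sub_left]
  rw [integral_sub (integrable_inner_left (by fun_prop) hψ hψs)
    (integrable_inner_left hg hψ hψs), integral_sub (integrable_inner_left (by fun_prop) hg hgs)
    (integrable_inner_left hψ hg hgs), ← integral_add_right_eq_self (fun x => ⟪ψ (x - v), g x⟫) v]
  simp [real_inner_comm]

theorem tendsto_integral_inner_difference_left {g ψ : E → W} (hg : Continuous g)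
    (hgs : HasCompactSupport g) (hψ : ContDiff ℝ 1 ψ) (hψs : HasCompactSupport ψ) (v : E) :
    Tendsto (fun h : ℝ => h⁻¹ * ∫ x, ⟪g (x + h • v) - g x, ψ x⟫) (𝓝[>] 0)
      (𝓝 (-∫ x, ⟪fderiv ℝ ψ x v, g x⟫)) := by
  have := tendsto_integral_inner_difference hψ hψs hg hgs (-v)
  simp only [map_neg, inner_neg_left, integral_neg, smul_neg, ← sub_eq_add_neg] at this
  refine this.congr fun h => ?_
  rw [integral_inner_sub_comm hg hgs hψ.continuous hψs]

theorem integral_inner_fderiv_eq_neg {f ψ : E → W} (hf : ContDiff ℝ 1 f) (hψ : ContDiff ℝ 1 ψ)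
    (hψs : HasCompactSupport ψ) (w : E) :
    ∫ x, ⟪fderiv ℝ f x w, ψ x⟫ = -∫ x, ⟪f x, fderiv ℝ ψ x w⟫ := by
  have cf : Continuous fun x => fderiv ℝ f x w :=
    (hf.continuous_fderiv (by simp)).clm_apply continuous_const
  have cψ : Continuous fun x => fderiv ℝ ψ x w :=
    (hψ.continuous_fderiv (by simp)).clm_apply continuous_const
  rw [eq_comm, neg_eq_iff_eq_neg]
  exact integral_bilinear_fderiv_right_eq_neg_left_of_integrable (B := innerSL ℝ)
    (integrable_inner_left cf hψ.continuous hψs)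
    (integrable_inner_left hf.continuous cψ (hasCompactSupport_fderiv_apply hψs w))
    (integrable_inner_left hf.continuous hψ.continuous hψs)
    (fun x _ => hf.differentiable (by simp) x) (fun x _ => hψ.differentiable (by simp) x)

/-- Weak symmetry of second derivatives. -/
theorem tendsto_integral_inner_fderiv_difference {f ψ : E → W} (hf : ContDiff ℝ 1 f)
    (hfs : HasCompactSupport f) (hψ : ContDiff ℝ 1 ψ) (hψs : HasCompactSupport ψ) (v w : E) :
    Tendsto (fun h : ℝ => h⁻¹ * ∫ x, ⟪fderiv ℝ f (x + h • v) w - fderiv ℝ f x w, ψ x⟫)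
      (𝓝[>] 0) (𝓝 (-∫ x, ⟪fderiv ℝ f x v, fderiv ℝ ψ x w⟫)) := by
  have cψ : Continuous fun x => fderiv ℝ ψ x w :=
    (hψ.continuous_fderiv (by simp)).clm_apply continuous_const
  refine (tendsto_integral_inner_difference hf hfs cψ
    (hasCompactSupport_fderiv_apply hψs w) v).neg.congr fun h => ?_
  have hd : ContDiff ℝ 1 fun x => f (x + h • v) - f x := by fun_prop
  rw [← mul_neg, ← integral_inner_fderiv_eq_neg hd hψ hψs w]
  congr 2 with x
  rw [fderiv_fun_sub, fderiv_comp_add_right]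
  · simp
  · exact (differentiableAt_comp_add_right _).2 (hf.differentiable (by simp) _)
  · exact hf.differentiable (by simp) _

theorem tendsto_integral_inner_fderiv_difference_comm {f ψ : E → W} (hf : ContDiff ℝ 1 f)
    (hfs : HasCompactSupport f) (hψ : ContDiff ℝ 1 ψ) (hψs : HasCompactSupport ψ) (v w : E) :
    Tendsto (fun h : ℝ => h⁻¹ * (∫ x, ⟪fderiv ℝ f (x + h • v) w - fderiv ℝ f x w, ψ x⟫) -
      h⁻¹ * ∫ x, ⟪fderiv ℝ f (x + h • w) v - fderiv ℝ f x v, ψ x⟫) (𝓝[>] 0) (𝓝 0) := by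
  have cf : Continuous fun x => fderiv ℝ f x v :=
    (hf.continuous_fderiv (by simp)).clm_apply continuous_const
  have h1 := tendsto_integral_inner_fderiv_difference hf hfs hψ hψs v w
  have h2 := tendsto_integral_inner_difference_left cf (hasCompactSupport_fderiv_apply hfs v)
    hψ hψs w
  simpa [real_inner_comm] using h1.sub h2

/-- Weak symmetry of second derivatives against merely continuous test fields, given `L¹` bounds on
the difference quotients. -/
theorem tendsto_integral_mul_inner_fderiv_difference_comm [FiniteDimensional ℝ W]
    {f : E → W} {φ : E → ℝ}
    (hf : ContDiff ℝ 1 f) (hfs : HasCompactSupport f) (hφ : ContDiff ℝ 1 φ)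
    (hφs : HasCompactSupport φ)
    (hb : ∀ v w, ∃ C : ℝ, ∀ᶠ h : ℝ in 𝓝[>] 0,
      h⁻¹ * ∫ x, |φ x| * ‖fderiv ℝ f (x + h • v) w - fderiv ℝ f x w‖ ≤ C)
    {Y : E → W} (hY : UniformContinuous Y) (v w : E) :
    Tendsto (fun h : ℝ =>
      h⁻¹ * (∫ x, φ x * ⟪fderiv ℝ f (x + h • v) w - fderiv ℝ f x w, Y x⟫) -
      h⁻¹ * ∫ x, φ x * ⟪fderiv ℝ f (x + h • w) v - fderiv ℝ f x v, Y x⟫) (𝓝[>] 0) (𝓝 0) := by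
  obtain ⟨C₁, hC₁⟩ := hb v w
  obtain ⟨C₂, hC₂⟩ := hb w v
  have cφ := hφ.continuous
  have cY := hY.continuous
  have cf : ∀ w, Continuous fun x => fderiv ℝ f x w := fun w =>
    (hf.continuous_fderiv (by simp)).clm_apply continuous_const
  rw [Metric.tendsto_nhds]
  intro ε hε
  set δ : ℝ := ε / (2 * (|C₁| + |C₂| + 1)) with hδ
  have hδ0 : 0 < δ := by positivity
  obtain ⟨Z, hZ, hZY⟩ := hY.exists_contDiff_dist_le hδ0
  have hZ1 : ContDiff ℝ 1 Z := hZ.of_le (by exact_mod_cast le_top)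
  have hlim := tendsto_integral_inner_fderiv_difference_comm (ψ := fun x => φ x • Z x) hf hfs
    (hφ.smul hZ1) (hφs.smul_right (f' := Z)) v w
  rw [Metric.tendsto_nhds] at hlim
  -- replacing `Y` by `Z` costs at most `δ` times the `L¹` bound
  have hrep : ∀ (v w : E) (h : ℝ), 0 < h →
      |h⁻¹ * (∫ x, φ x * ⟪fderiv ℝ f (x + h • v) w - fderiv ℝ f x w, Y x⟫) -
        h⁻¹ * ∫ x, ⟪fderiv ℝ f (x + h • v) w - fderiv ℝ f x w, φ x • Z x⟫| ≤
      δ * (h⁻¹ * ∫ x, |φ x| * ‖fderiv ℝ f (x + h • v) w - fderiv ℝ f x w‖) := by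
    intro v w h hh
    have hd : Continuous fun x => fderiv ℝ f (x + h • v) w - fderiv ℝ f x w :=
      ((cf w).comp (continuous_add_const _)).sub (cf w)
    have i : ∀ T : E → W, Continuous T →
        Integrable fun x => φ x * ⟪fderiv ℝ f (x + h • v) w - fderiv ℝ f x w, T x⟫ := by
      intro T hT
      exact (cφ.mul (hd.inner hT)).integrable_of_hasCompactSupport hφs.mul_right
    have i' : Integrable fun x => |φ x| * ‖fderiv ℝ f (x + h • v) w - fderiv ℝ f x w‖ :=
      (cφ.abs.mul hd.norm).integrable_of_hasCompactSupport
        (hφs.norm.mul_right (f := fun x => |φ x|))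
    simp only [real_inner_smul_right]
    rw [← mul_sub, ← integral_sub (i Y cY) (i Z hZ1.continuous), abs_mul,
      abs_of_pos (inv_pos.2 hh), mul_left_comm, ← integral_const_mul]
    gcongr
    refine (norm_integral_le_integral_norm (μ := volume) _).trans
      (integral_mono ((i Y cY).sub (i Z hZ1.continuous)).norm (i'.const_mul δ) fun x => ?_)
    simp only [Pi.sub_apply]
    rw [← mul_sub, ← inner_sub_right, norm_mul, Real.norm_eq_abs]
    have : ‖Y x - Z x‖ ≤ δ := by
      have := (hZY x).le
      rwa [dist_comm, dist_eq_norm] at this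
    calc |φ x| * ‖⟪fderiv ℝ f (x + h • v) w - fderiv ℝ f x w, Y x - Z x⟫‖
        ≤ |φ x| * (‖fderiv ℝ f (x + h • v) w - fderiv ℝ f x w‖ * δ) := by
          gcongr
          exact (norm_inner_le_norm _ _).trans (by gcongr)
      _ = _ := by ring
  filter_upwards [hC₁, hC₂, hlim (ε / 2) (by positivity), self_mem_nhdsWithin]
    with h b1 b2 b3 (hh : 0 < h)
  have r1 := hrep v w h hh
  have r2 := hrep w v h hh
  rw [Real.dist_eq, sub_zero] at b3 ⊢
  have hs : δ * (C₁ + C₂) < ε / 2 := by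
    have : δ * (2 * (|C₁| + |C₂| + 1)) = ε := by
      rw [hδ]; field_simp
    have h1 := le_abs_self C₁
    have h2 := le_abs_self C₂
    nlinarith
  have b1' := mul_le_mul_of_nonneg_left b1 hδ0.le
  have b2' := mul_le_mul_of_nonneg_left b2 hδ0.le
  rw [abs_le] at r1 r2
  rw [abs_lt] at b3 ⊢
  constructor <;> linarith [r1.1, r1.2, r2.1, r2.2, b3.1, b3.2]

end Limits

section Koszul

theorem eventually_add_smul_mem {E : Type*} [NormedAddCommGroup E] [NormedSpace ℝ E]
    {K Ω : Set E} (hK : IsCompact K) (hΩ : IsOpen Ω) (hKΩ : K ⊆ Ω) (v : E) :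
    ∀ᶠ h : ℝ in 𝓝[>] 0, ∀ x ∈ K, x + h • v ∈ Ω := by
  refine nhdsWithin_le_nhds ?_
  have hc : Continuous fun p : ℝ × E => p.2 + p.1 • v := by fun_prop
  have := hK.eventually_forall_of_forall_eventually (x₀ := (0 : ℝ))
    (P := fun h x => x + h • v ∈ Ω) fun x hx => ?_
  · exact this
  · exact hc.continuousAt.eventually_mem (hΩ.mem_nhds (by simpa using hKΩ hx))

/-- Koszul's formula, in the limit. -/
theorem tendsto_koszul {E : Type*} [NormedAddCommGroup E] [InnerProductSpace ℝ E]
    {ι : Type*} {l : Filter ι} {Γ : ι → E → E → E → ℝ} {α : E → ℝ}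
    (hmetric : ∀ v w u, Tendsto (fun h => Γ h v w u + Γ h v u w) l (𝓝 (2 * α v * ⟪w, u⟫)))
    (hsymm : ∀ v w u, Tendsto (fun h => Γ h v w u - Γ h w v u) l (𝓝 0)) (v w u : E) :
    Tendsto (fun h => Γ h v w u) l (𝓝 (α v * ⟪w, u⟫ + α w * ⟪v, u⟫ - α u * ⟪v, w⟫)) := by
  have := ((((((hmetric v w u).add (hmetric w v u)).sub (hmetric u v w)).add (hsymm v w u)).add
    (hsymm u v w)).add (hsymm u w v)).const_mul (1 / 2)
  convert this using 2
  · ring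
  · ring

variable {E : Type*} [NormedAddCommGroup E] [InnerProductSpace ℝ E] [FiniteDimensional ℝ E]
  [MeasurableSpace E] [BorelSpace E]

/-- Difference quotients of the metric relation of a conformal map. -/
theorem tendsto_integral_metric {f : E → E} {g φ : E → ℝ} {Ω : Set E} (hf : ContDiff ℝ 1 f)
    (hg : Continuous g) (hgs : HasCompactSupport g) (hΩ : IsOpen Ω)
    (hconf : ∀ x ∈ Ω, ∀ v w, ⟪fderiv ℝ f x v, fderiv ℝ f x w⟫ = g x * ⟪v, w⟫)
    (hφ : ContDiff ℝ 1 φ) (hφs : HasCompactSupport φ) (hφΩ : tsupport φ ⊆ Ω)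
    (hb : ∀ v w, ∃ C : ℝ, ∀ᶠ h : ℝ in 𝓝[>] 0,
      ∫ x, |φ x| * ‖fderiv ℝ f (x + h • v) w - fderiv ℝ f x w‖ ^ 2 ≤ C * h ^ 2) (v w u : E) :
    Tendsto (fun h : ℝ =>
      h⁻¹ * (∫ x, φ x * ⟪fderiv ℝ f (x + h • v) w - fderiv ℝ f x w, fderiv ℝ f x u⟫) +
      h⁻¹ * ∫ x, φ x * ⟪fderiv ℝ f (x + h • v) u - fderiv ℝ f x u, fderiv ℝ f x w⟫) (𝓝[>] 0)
      (𝓝 (2 * (-(1 / 2) * ∫ x, fderiv ℝ φ x v * g x) * ⟪w, u⟫)) := by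
  have cφ := hφ.continuous
  have cf : ∀ w, Continuous fun x => fderiv ℝ f x w := fun w =>
    (hf.continuous_fderiv (by simp)).clm_apply continuous_const
  have cd : ∀ (h : ℝ) w, Continuous fun x => fderiv ℝ f (x + h • v) w - fderiv ℝ f x w :=
    fun h w => ((cf w).comp (continuous_add_const _)).sub (cf w)
  have int : ∀ T : E → ℝ, Continuous T → Integrable fun x => φ x * T x := fun T hT =>
    (cφ.mul hT).integrable_of_hasCompactSupport hφs.mul_right
  have int' : ∀ T : E → ℝ, Continuous T → Integrable fun x => |φ x| * T x := fun T hT =>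
    (cφ.abs.mul hT).integrable_of_hasCompactSupport (hφs.norm.mul_right (f := fun x => |φ x|))
  have h1 := (tendsto_integral_inner_difference_left hg hgs hφ hφs v).mul_const ⟪w, u⟫
  have h2 : Tendsto (fun h : ℝ => h⁻¹ * ∫ x, φ x *
      ⟪fderiv ℝ f (x + h • v) w - fderiv ℝ f x w, fderiv ℝ f (x + h • v) u - fderiv ℝ f x u⟫)
      (𝓝[>] 0) (𝓝 0) := by
    obtain ⟨C₁, hC₁⟩ := hb v w
    obtain ⟨C₂, hC₂⟩ := hb v u
    refine squeeze_zero_norm' (a := fun h => (C₁ + C₂) * h) ?_ ?_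
    · filter_upwards [hC₁, hC₂, self_mem_nhdsWithin] with h b1 b2 (hh : 0 < h)
      rw [norm_mul, norm_inv, Real.norm_of_nonneg hh.le, inv_mul_le_iff₀ hh]
      refine (norm_integral_le_integral_norm _).trans ?_
      have i : ∀ w, Integrable fun x =>
          |φ x| * ‖fderiv ℝ f (x + h • v) w - fderiv ℝ f x w‖ ^ 2 := fun w =>
        int' _ ((cd h w).norm.pow 2)
      calc _ ≤ ∫ x, (|φ x| * ‖fderiv ℝ f (x + h • v) w - fderiv ℝ f x w‖ ^ 2 +
              |φ x| * ‖fderiv ℝ f (x + h • v) u - fderiv ℝ f x u‖ ^ 2) := by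
            refine integral_mono (int _ ((cd h w).inner (cd h u))).norm
              ((i w).add (i u)) fun x => ?_
            simp only [norm_mul, Real.norm_eq_abs (φ x)]
            rw [← mul_add]
            gcongr
            refine (norm_inner_le_norm _ _).trans ?_
            nlinarith [sq_nonneg (‖fderiv ℝ f (x + h • v) w - fderiv ℝ f x w‖ -
              ‖fderiv ℝ f (x + h • v) u - fderiv ℝ f x u‖),
              sq_nonneg ‖fderiv ℝ f (x + h • v) w - fderiv ℝ f x w‖,
              sq_nonneg ‖fderiv ℝ f (x + h • v) u - fderiv ℝ f x u‖]
        _ ≤ C₁ * h ^ 2 + C₂ * h ^ 2 := by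
            rw [integral_add (i w) (i u)]
            exact add_le_add b1 b2
        _ = _ := by ring
    · have : Continuous fun h : ℝ => (C₁ + C₂) * h := by fun_prop
      simpa using (this.tendsto 0).mono_left nhdsWithin_le_nhds
  have h3 := h1.sub h2
  have e : 2 * (-(1 / 2) * ∫ x, fderiv ℝ φ x v * g x) * ⟪w, u⟫ =
      (-∫ x, ⟪fderiv ℝ φ x v, g x⟫) * ⟪w, u⟫ - 0 := by
    simp only [RCLike.inner_apply, conj_trivial, mul_comm (g _)]
    ring
  rw [e]
  refine h3.congr' ?_
  filter_upwards [eventually_add_smul_mem hφs hΩ hφΩ v] with h hmem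
  have key : ∀ x, ⟪g (x + h • v) - g x, φ x⟫ * ⟪w, u⟫ =
      φ x * ⟪fderiv ℝ f (x + h • v) w - fderiv ℝ f x w, fderiv ℝ f x u⟫ +
      φ x * ⟪fderiv ℝ f (x + h • v) u - fderiv ℝ f x u, fderiv ℝ f x w⟫ +
      φ x * ⟪fderiv ℝ f (x + h • v) w - fderiv ℝ f x w,
        fderiv ℝ f (x + h • v) u - fderiv ℝ f x u⟫ := by
    intro x
    by_cases hx : φ x = 0
    · simp [hx]
    have hx' : x ∈ tsupport φ := subset_tsupport _ hx
    have e1 := hconf x (hφΩ hx') w u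
    have e2 := hconf _ (hmem x hx') w u
    simp only [inner_sub_left, inner_sub_right, RCLike.inner_apply, conj_trivial]
    rw [real_inner_comm (fderiv ℝ f x w) (fderiv ℝ f x u),
      real_inner_comm (fderiv ℝ f x w) (fderiv ℝ f (x + h • v) u), e1, e2]
    ring
  have i1 := int _ ((cd h w).inner (cf u))
  have i2 := int _ ((cd h u).inner (cf w))
  have i3 := int _ ((cd h w).inner (cd h u))
  have key' : (∫ x, ⟪g (x + h • v) - g x, φ x⟫) * ⟪w, u⟫ = _ :=
    (integral_mul_const _ _).symm.trans ((integral_congr_ae (ae_of_all _ key)).trans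
      ((integral_add (i1.add i2) i3).trans (congrArg (· + _) (integral_add i1 i2))))
  rw [mul_assoc, key']
  ring

end Koszul

section Rigidity

variable {E : Type*} [NormedAddCommGroup E] [InnerProductSpace ℝ E] [FiniteDimensional ℝ E]

theorem inner_subgradient_le {F : E → ℝ} {A B : E →L[ℝ] E} {a b : ℝ} (ha : 0 < a)
    (hFξ : ∀ ξ, 0 ≤ F ξ)
    (hA : ∀ v w, ⟪A v, A w⟫ = a ^ 2 * ⟪v, w⟫) (hFA : ∀ ξ, F (A ξ) = a * F ξ)
    (hFB : ∀ ξ, F (B ξ) = b * F ξ) {ξ p : E} (hp : ∀ η, ⟪p, η⟫ ≤ F η) (hpξ : ⟪p, ξ⟫ = F ξ) :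
    ⟪B ξ - A ξ, A p⟫ ≤ (b ^ 2 - a ^ 2) * (F ξ / 2) := by
  have hinj : Function.Injective A.toLinearMap := by
    refine (injective_iff_map_eq_zero _).2 fun v hv => ?_
    have := hA v v
    rw [show A v = 0 from hv, inner_zero_left, eq_comm, mul_eq_zero] at this
    exact inner_self_eq_zero.1 (this.resolve_left (by positivity))
  obtain ⟨η, hη⟩ := LinearMap.injective_iff_surjective.1 hinj (B ξ)
  replace hη : A η = B ξ := hη
  have h1 : a * F η = b * F ξ := by rw [← hFA, hη, hFB]
  rw [inner_sub_left, ← hη, hA, hA, real_inner_comm, real_inner_comm p ξ, hpξ]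
  have h2 : a ^ 2 * ⟪p, η⟫ ≤ a * (b * F ξ) := by
    rw [← h1]
    nlinarith [hp η, sq_nonneg a]
  nlinarith [mul_nonneg (hFξ ξ) (sq_nonneg (a - b))]

variable [MeasurableSpace E] [BorelSpace E]

theorem integral_fderiv_mul_eq_zero {F : E → ℝ} (hF : IsMinkowskiNorm F)
    (hne : ¬IsEuclideanNorm F) (hE : 1 < Module.rank ℝ E)
    {f : E → E} {l g φ : E → ℝ} {Ω : Set E} (hf : ContDiff ℝ 1 f) (hfs : HasCompactSupport f)
    (hg : Continuous g) (hgs : HasCompactSupport g) (hΩ : IsOpen Ω) (hl : ∀ x ∈ Ω, 0 < l x)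
    (hgl : ∀ x ∈ Ω, g x = l x ^ 2)
    (hconf : ∀ x ∈ Ω, ∀ v w, ⟪fderiv ℝ f x v, fderiv ℝ f x w⟫ = l x ^ 2 * ⟪v, w⟫)
    (hFf : ∀ x ∈ Ω, ∀ ξ, F (fderiv ℝ f x ξ) = l x * F ξ)
    (hφ : ContDiff ℝ 1 φ) (hφs : HasCompactSupport φ) (hφΩ : tsupport φ ⊆ Ω) (hφ0 : ∀ x, 0 ≤ φ x)
    (hb : ∀ v w, ∃ C : ℝ, ∀ᶠ h : ℝ in 𝓝[>] 0,
      ∫ x, |φ x| * ‖fderiv ℝ f (x + h • v) w - fderiv ℝ f x w‖ ^ 2 ≤ C * h ^ 2) (v : E) :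
    ∫ x, fderiv ℝ φ x v * g x = 0 := by
  have cφ := hφ.continuous
  have cf : ∀ w, Continuous fun x => fderiv ℝ f x w := fun w =>
    (hf.continuous_fderiv (by simp)).clm_apply continuous_const
  have cd : ∀ (h : ℝ) v w, Continuous fun x => fderiv ℝ f (x + h • v) w - fderiv ℝ f x w :=
    fun h v w => ((cf w).comp (continuous_add_const _)).sub (cf w)
  have int : ∀ T : E → ℝ, Continuous T → Integrable fun x => φ x * T x := fun T hT =>
    (cφ.mul hT).integrable_of_hasCompactSupport hφs.mul_right
  have int' : ∀ T : E → ℝ, Continuous T → Integrable fun x => |φ x| * T x := fun T hT =>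
    (cφ.abs.mul hT).integrable_of_hasCompactSupport (hφs.norm.mul_right (f := fun x => |φ x|))
  have intg : ∀ v, Integrable fun x => fderiv ℝ φ x v * g x := fun v =>
    (((hφ.continuous_fderiv (by simp)).clm_apply continuous_const).mul
      hg).integrable_of_hasCompactSupport hgs.mul_left
  let α : E →ₗ[ℝ] ℝ :=
    { toFun := fun v => -(1 / 2) * ∫ x, fderiv ℝ φ x v * g x
      map_add' := fun v w => by
        simp only [map_add, add_mul]
        rw [integral_add (intg v) (intg w)]
        ring
      map_smul' := fun c v => by
        simp only [map_smul, smul_eq_mul, mul_assoc, RingHom.id_apply]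
        rw [integral_const_mul]
        ring }
  have hb1 : ∀ v w, ∃ C : ℝ, ∀ᶠ h : ℝ in 𝓝[>] 0,
      h⁻¹ * ∫ x, |φ x| * ‖fderiv ℝ f (x + h • v) w - fderiv ℝ f x w‖ ≤ C := by
    intro v w
    obtain ⟨C, hC⟩ := hb v w
    refine ⟨(∫ x, |φ x|) + C, ?_⟩
    filter_upwards [hC, self_mem_nhdsWithin] with h hCh (hh : 0 < h)
    have i0 : Integrable fun x => |φ x| := by simpa using int' (fun _ => 1) continuous_const
    have i2 : Integrable fun x => |φ x| * ‖fderiv ℝ f (x + h • v) w - fderiv ℝ f x w‖ ^ 2 :=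
      int' _ ((cd h v w).norm.pow 2)
    rw [← integral_const_mul]
    calc _ ≤ ∫ x, (|φ x| + (h ^ 2)⁻¹ *
          (|φ x| * ‖fderiv ℝ f (x + h • v) w - fderiv ℝ f x w‖ ^ 2)) := by
          refine integral_mono ((int' _ (cd h v w).norm).const_mul _)
            (i0.add (i2.const_mul _)) fun x => ?_
          set t := ‖fderiv ℝ f (x + h • v) w - fderiv ℝ f x w‖
          have : h⁻¹ * t ≤ 1 + (h⁻¹ * t) ^ 2 := by nlinarith [sq_nonneg (h⁻¹ * t - 1)]
          calc h⁻¹ * (|φ x| * t) = |φ x| * (h⁻¹ * t) := by ring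
            _ ≤ |φ x| * (1 + (h⁻¹ * t) ^ 2) := by gcongr
            _ = _ := by rw [mul_pow, inv_pow]; ring
      _ ≤ (∫ x, |φ x|) + C := by
          rw [integral_add i0 (i2.const_mul _), integral_const_mul]
          gcongr
          rw [inv_mul_le_iff₀ (by positivity)]
          linarith
  have hunif : ∀ u, UniformContinuous fun x => fderiv ℝ f x u := fun u =>
    (hasCompactSupport_fderiv_apply hfs u).uniformContinuous_of_continuous (cf u)
  have hΓ := tendsto_koszul (l := 𝓝[>] (0 : ℝ)) (α := α) (Γ := fun (h : ℝ) v w u =>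
      h⁻¹ * ∫ x, φ x * ⟪fderiv ℝ f (x + h • v) w - fderiv ℝ f x w, fderiv ℝ f x u⟫)
    (tendsto_integral_metric hf hg hgs hΩ (fun x hx v w => by rw [hgl x hx, hconf x hx])
      hφ hφs hφΩ hb)
    (fun v w u => tendsto_integral_mul_inner_fderiv_difference_comm hf hfs hφ hφs hb1
      (hunif u) v w)
  have hα : α = 0 := by
    refine hF.eq_zero_of_not_isEuclideanNorm hne hE α fun ξ p hp hpξ v => ?_
    have h1 := (tendsto_integral_inner_difference_left hg hgs hφ hφs v).mul_const (F ξ / 2)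
    have h2 := le_of_tendsto_of_tendsto (hΓ v ξ p) h1 ?_
    · have e : (-∫ x, ⟪fderiv ℝ φ x v, g x⟫) * (F ξ / 2) = α v * F ξ := by
        simp only [RCLike.inner_apply, conj_trivial, mul_comm (g _), α, LinearMap.coe_mk,
          AddHom.coe_mk]
        ring
      rw [e, real_inner_comm, hpξ] at h2
      linarith
    · filter_upwards [eventually_add_smul_mem hφs hΩ hφΩ v, self_mem_nhdsWithin]
        with h hmem (hh : 0 < h)
      rw [mul_assoc, ← integral_mul_const]
      refine mul_le_mul_of_nonneg_left ?_ (inv_pos.2 hh).le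
      refine integral_mono (int _ ((cd h v ξ).inner (cf p))) ?_ fun x => ?_
      · exact (integrable_inner_left (by fun_prop) cφ hφs).mul_const _
      · by_cases hx : φ x = 0
        · simp [hx]
        have hx' : x ∈ tsupport φ := subset_tsupport _ hx
        have := inner_subgradient_le (hl x (hφΩ hx')) hF.2.1 (hconf x (hφΩ hx'))
          (hFf x (hφΩ hx')) (hFf _ (hmem x hx')) hp hpξ
        rw [← hgl _ (hmem x hx'), ← hgl x (hφΩ hx')] at this
        simp only [RCLike.inner_apply, conj_trivial]
        rw [mul_assoc]
        exact mul_le_mul_of_nonneg_left this (hφ0 x)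
  have := congrArg (fun β : E →ₗ[ℝ] ℝ => β v) hα
  simp only [α, LinearMap.coe_mk, AddHom.coe_mk, LinearMap.zero_apply] at this
  linarith

end Rigidity

section WeakConstancy

open scoped Convolution
open ContinuousLinearMap

variable {E : Type*} [NormedAddCommGroup E] [InnerProductSpace ℝ E] [FiniteDimensional ℝ E]
  [MeasurableSpace E] [BorelSpace E]

/-- A continuous function with vanishing weak derivative on an open set is locally constant
there. -/
theorem eventually_eq_of_integral_fderiv_mul_eq_zero {g : E → ℝ} (hg : Continuous g) {Ω : Set E}
    (hΩ : IsOpen Ω)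
    (h : ∀ φ : E → ℝ, ContDiff ℝ 1 φ → HasCompactSupport φ → tsupport φ ⊆ Ω → (∀ x, 0 ≤ φ x) →
      ∀ v, ∫ x, fderiv ℝ φ x v * g x = 0) {x₀ : E} (hx₀ : x₀ ∈ Ω) :
    ∀ᶠ x in 𝓝 x₀, g x = g x₀ := by
  obtain ⟨r, hr, hrΩ⟩ := Metric.isOpen_iff.1 hΩ x₀ hx₀
  let φ : ℕ → ContDiffBump (0 : E) := fun i =>
    ⟨r / 2 / (i + 2), r / 2 / (i + 1), by positivity, by gcongr; norm_num⟩
  have hφ : Tendsto (fun i => (φ i).rOut) atTop (𝓝 0) := by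
    have := (tendsto_one_div_add_atTop_nhds_zero_nat (𝕜 := ℝ)).const_mul (r / 2)
    simpa [φ, div_eq_mul_inv] using this
  have hφr : ∀ i, (φ i).rOut ≤ r / 2 := fun i =>
    div_le_self (by positivity) (by linarith [(Nat.cast_nonneg i : (0 : ℝ) ≤ i)])
  have hconst : ∀ i, ∀ y ∈ Metric.ball x₀ (r / 2),
      ((φ i).normed volume ⋆[lsmul ℝ ℝ, volume] g) y =
        ((φ i).normed volume ⋆[lsmul ℝ ℝ, volume] g) x₀ := by
    intro i y hy
    set χ := (φ i).normed volume with hχ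
    have hχ1 : ContDiff ℝ 1 χ := (φ i).contDiff_normed
    have hχs : HasCompactSupport χ := (φ i).hasCompactSupport_normed
    refine (convex_ball x₀ (r / 2)).is_const_of_fderivWithin_eq_zero
      (𝕜 := ℝ) (f := χ ⋆[lsmul ℝ ℝ, volume] g) ?_ ?_ hy (Metric.mem_ball_self (by positivity))
    · intro z _
      exact (hχs.hasFDerivAt_convolution_left (lsmul ℝ ℝ) hχ1 hg.locallyIntegrable
        z).differentiableAt.differentiableWithinAt
    · intro z hz
      have hd := hχs.hasFDerivAt_convolution_right (lsmul ℝ ℝ).flip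
        (hg.locallyIntegrable (μ := volume)) hχ1 z
      rw [convolution_flip] at hd
      rw [hd.hasFDerivWithinAt.fderivWithin (Metric.isOpen_ball.uniqueDiffWithinAt hz)]
      ext v
      rw [convolution_precompR_apply _ hg.locallyIntegrable (hχs.fderiv ℝ)
        (hχ1.continuous_fderiv (by simp))]
      have hts : tsupport (fun x => χ (z - x)) ⊆ Metric.closedBall z (r / 2) := by
        refine closure_minimal (fun x hx => ?_) Metric.isClosed_closedBall
        have : z - x ∈ Function.support χ := hx
        rw [hχ, ContDiffBump.support_normed_eq, mem_ball_zero_iff] at this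
        rw [Metric.mem_closedBall, dist_comm, dist_eq_norm]
        exact this.le.trans (hφr i)
      have := h (fun x => χ (z - x)) (hχ1.comp (contDiff_const.sub contDiff_id))
        ((isCompact_closedBall z (r / 2)).of_isClosed_subset (isClosed_tsupport _) hts)
        (hts.trans fun x hx => hrΩ ?_) (fun x => (φ i).nonneg_normed _) v
      · have e : ∀ x, fderiv ℝ (fun x => χ (z - x)) x v = -fderiv ℝ χ (z - x) v := fun x => by
          have hd : HasFDerivAt (fun x => χ (z - x)) _ x := (hχ1.differentiable (by simp) (z - x)).hasFDerivAt.comp x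
            ((hasFDerivAt_id x).const_sub z)
          rw [hd.fderiv]
          simp
        simp only [e, neg_mul, integral_neg, neg_eq_zero] at this
        simpa [convolution_def, mul_comm] using this
      · rw [Metric.mem_ball] at hz ⊢
        rw [Metric.mem_closedBall] at hx
        linarith [dist_triangle x z x₀]
  filter_upwards [Metric.ball_mem_nhds x₀ (by positivity : 0 < r / 2)] with y hy
  have h1 := ContDiffBump.convolution_tendsto_right_of_continuous (μ := volume) hφ hg y
  have h2 := ContDiffBump.convolution_tendsto_right_of_continuous (μ := volume) hφ hg x₀
  exact tendsto_nhds_unique (h1.congr fun i => hconst i y hy) h2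

end WeakConstancy

section WeakEquation

variable {E : Type*} [NormedAddCommGroup E] [InnerProductSpace ℝ E] [FiniteDimensional ℝ E]

theorem adjoint_comp_eq_of_inner {A : E →L[ℝ] E} {a : ℝ}
    (hA : ∀ v w, ⟪A v, A w⟫ = a ^ 2 * ⟪v, w⟫) (v : E) : A.adjoint (A v) = a ^ 2 • v := by
  refine ext_inner_right ℝ fun w => ?_
  rw [ContinuousLinearMap.adjoint_inner_left, hA, real_inner_smul_left]

theorem comp_adjoint_eq_of_inner {A : E →L[ℝ] E} {a : ℝ} (ha : 0 < a)
    (hA : ∀ v w, ⟪A v, A w⟫ = a ^ 2 * ⟪v, w⟫) (v : E) : A (A.adjoint v) = a ^ 2 • v := by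
  have hinj : Function.Injective A.toLinearMap := by
    refine (injective_iff_map_eq_zero _).2 fun v hv => ?_
    have := hA v v
    rw [show A v = 0 from hv, inner_zero_left, eq_comm, mul_eq_zero] at this
    exact inner_self_eq_zero.1 (this.resolve_left (by positivity))
  obtain ⟨w, hw⟩ := LinearMap.injective_iff_surjective.1 hinj v
  replace hw : A w = v := hw
  rw [← hw, adjoint_comp_eq_of_inner hA, map_smul]

theorem norm_adjoint_apply_of_inner {A : E →L[ℝ] E} {a : ℝ} (ha : 0 < a)
    (hA : ∀ v w, ⟪A v, A w⟫ = a ^ 2 * ⟪v, w⟫) (v : E) : ‖A.adjoint v‖ = a * ‖v‖ := by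
  rw [← sq_eq_sq₀ (norm_nonneg _) (by positivity), ← real_inner_self_eq_norm_sq,
    ContinuousLinearMap.adjoint_inner_left, comp_adjoint_eq_of_inner ha hA, real_inner_smul_right,
    real_inner_self_eq_norm_sq]
  ring

theorem abs_det_of_inner {A : E →L[ℝ] E} {a : ℝ} (ha : 0 < a)
    (hA : ∀ v w, ⟪A v, A w⟫ = a ^ 2 * ⟪v, w⟫) : |A.det| = a ^ Module.finrank ℝ E := by
  have h1 : |A.det| ^ 2 = (a ^ Module.finrank ℝ E) ^ 2 := by
    have := A.normDet_sq
    rw [LinearMap.normDet_eq_abs_det] at this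
    have e : A.adjoint ∘L A = a ^ 2 • ContinuousLinearMap.id ℝ E :=
      ContinuousLinearMap.ext fun v => adjoint_comp_eq_of_inner hA v
    rw [e] at this
    have e2 : (a ^ 2 • ContinuousLinearMap.id ℝ E).det = (a ^ 2) ^ Module.finrank ℝ E := by
      change LinearMap.det (a ^ 2 • LinearMap.id) = _
      simp
    rw [← pow_mul, mul_comm _ 2, pow_mul, ← e2]
    simpa using this
  exact (sq_eq_sq₀ (abs_nonneg _) (by positivity)).1 h1

variable [MeasurableSpace E] [BorelSpace E]

theorem integral_fderiv_eq_zero {ψ : E → ℝ} (hψ : ContDiff ℝ 1 ψ) (hψs : HasCompactSupport ψ)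
    (e : E) : ∫ x, fderiv ℝ ψ x e = 0 := by
  have := integral_inner_fderiv_eq_neg (f := fun _ => (1 : ℝ)) contDiff_const hψ hψs e
  simpa using this

/-- The coordinate functions of a conformal diffeomorphism are weakly `n`-harmonic. -/
theorem integral_fderiv_adjoint_eq_zero {f f' : E → E} {U U' : Set E} {l : E → ℝ} {k : ℕ}
    (hk : Module.finrank ℝ E = k + 2) (hU : IsOpen U) (hU' : IsOpen U')
    (hf : ContDiffOn ℝ 1 f U) (hf' : ContDiffOn ℝ 1 f' U') (hbij : BijOn f U U')
    (hinv : ∀ x ∈ U, f' (f x) = x) (hl : ∀ x ∈ U, 0 < l x)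
    (hconf : ∀ x ∈ U, ∀ v w, ⟪fderiv ℝ f x v, fderiv ℝ f x w⟫ = l x ^ 2 * ⟪v, w⟫)
    {e : E} (he : ‖e‖ = 1) {ψ : E → ℝ} (hψ : ContDiff ℝ 1 ψ) (hψs : HasCompactSupport ψ)
    (hψU : tsupport ψ ⊆ U) :
    ∫ x, fderiv ℝ ψ x (‖(fderiv ℝ f x).adjoint e‖ ^ k • (fderiv ℝ f x).adjoint e) = 0 := by
  classical
  have df : ∀ x ∈ U, HasFDerivAt f (fderiv ℝ f x) x := fun x hx =>
    ((hf.contDiffAt (hU.mem_nhds hx)).differentiableAt (by simp)).hasFDerivAt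
  have df' : ∀ y ∈ U', HasFDerivAt f' (fderiv ℝ f' y) y := fun x hx =>
    ((hf'.contDiffAt (hU'.mem_nhds hx)).differentiableAt (by simp)).hasFDerivAt
  set K : Set E := f '' tsupport ψ with hK
  have hKc : IsCompact K := hψs.isCompact.image_of_continuousOn (hf.continuousOn.mono hψU)
  have hKU : K ⊆ U' := (image_mono hψU).trans hbij.image_eq.subset
  set χ : E → ℝ := U'.indicator (ψ ∘ f') with hχ
  have hχK : ∀ y, y ∉ K → χ y = 0 := by
    intro y hy
    by_cases hyU : y ∈ U'
    · rw [hχ, indicator_of_mem hyU]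
      obtain ⟨x, hx, rfl⟩ := hbij.surjOn hyU
      simp only [Function.comp_apply, hinv x hx]
      exact image_eq_zero_of_notMem_tsupport fun h => hy ⟨x, h, rfl⟩
    · exact indicator_of_notMem hyU _
  have hχU : ∀ y ∈ U', χ =ᶠ[𝓝 y] ψ ∘ f' := fun y hy => by
    filter_upwards [hU'.mem_nhds hy] with z hz using indicator_of_mem hz _
  have hχ1 : ContDiff ℝ 1 χ := by
    rw [contDiff_iff_contDiffAt]
    intro y
    by_cases hy : y ∈ U'
    · exact (hψ.contDiffAt.comp y (hf'.contDiffAt (hU'.mem_nhds hy))).congr_of_eventuallyEq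
        (hχU y hy)
    · refine contDiffAt_const (c := (0 : ℝ)) |>.congr_of_eventuallyEq ?_
      filter_upwards [hKc.isClosed.isOpen_compl.mem_nhds fun h => hy (hKU h)] with z hz
        using hχK z hz
  have hχs : HasCompactSupport χ := HasCompactSupport.intro hKc hχK
  have hχ0 := integral_fderiv_eq_zero hχ1 hχs e
  have hχts : tsupport χ ⊆ U' :=
    (closure_minimal (fun y hy => by by_contra h; exact hy (hχK y h)) hKc.isClosed).trans hKU
  have h1 : ∫ y in U', fderiv ℝ χ y e = 0 := by
    rw [setIntegral_eq_integral_of_forall_compl_eq_zero, hχ0]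
    intro y hy
    rw [fderiv_of_notMem_tsupport ℝ fun h => hy (hχts h)]
    rfl
  rw [← hbij.image_eq, integral_image_eq_integral_abs_det_fderiv_smul volume hU.measurableSet
    (fun x hx => (df x hx).hasFDerivWithinAt) hbij.injOn] at h1
  rw [← setIntegral_eq_integral_of_forall_compl_eq_zero (s := U), ← h1]
  · refine setIntegral_congr_fun hU.measurableSet fun x hx => ?_
    have hy := hbij.mapsTo hx
    have hinvx : fderiv ℝ f' (f x) ∘L fderiv ℝ f x = ContinuousLinearMap.id ℝ E := by
      refine ((df' _ hy).comp x (df x hx)).unique ((hasFDerivAt_id x).congr_of_eventuallyEq ?_)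
      filter_upwards [hU.mem_nhds hx] with z hz using hinv z hz
    have hG : (fderiv ℝ f x).adjoint e = l x ^ 2 • fderiv ℝ f' (f x) e := by
      have := congrArg (fderiv ℝ f' (f x)) (comp_adjoint_eq_of_inner (hl x hx) (hconf x hx) e)
      rw [map_smul] at this
      rw [← this]
      exact (DFunLike.congr_fun hinvx ((fderiv ℝ f x).adjoint e)).symm
    have hχd : fderiv ℝ χ (f x) = fderiv ℝ ψ x ∘L fderiv ℝ f' (f x) := by
      rw [(hχU _ hy).fderiv_eq]
      have h2 : HasFDerivAt ψ (fderiv ℝ ψ x) (f' (f x)) := by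
        rw [hinv x hx]
        exact (hψ.differentiable (by simp) x).hasFDerivAt
      exact (h2.comp _ (df' _ hy)).fderiv
    simp only [norm_adjoint_apply_of_inner (hl x hx) (hconf x hx), he, mul_one]
    rw [abs_det_of_inner (hl x hx) (hconf x hx), hk, hχd, hG, map_smul, map_smul]
    simp only [smul_eq_mul, ContinuousLinearMap.comp_apply]
    ring
  · intro x hx
    rw [fderiv_of_notMem_tsupport ℝ fun h => hx (hψU h)]
    rfl

end WeakEquation

section LocalConstancy

theorem contDiff_smul_of_tsupport_subset {E : Type*} [NormedAddCommGroup E] [NormedSpace ℝ E]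
    {η : E → ℝ} {f : E → E} {U : Set E} (hU : IsOpen U)
    (hη : ContDiff ℝ 1 η) (hηU : tsupport η ⊆ U) (hf : ContDiffOn ℝ 1 f U) :
    ContDiff ℝ 1 fun x => η x • f x := by
  rw [contDiff_iff_contDiffAt]
  intro x
  by_cases hx : x ∈ U
  · exact hη.contDiffAt.smul (hf.contDiffAt (hU.mem_nhds hx))
  · refine contDiffAt_const (c := (0 : E)) |>.congr_of_eventuallyEq ?_
    filter_upwards [(isClosed_tsupport η).isOpen_compl.mem_nhds fun h => hx (hηU h)] with z hz
    rw [image_eq_zero_of_notMem_tsupport hz, zero_smul]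

variable {E : Type*} [NormedAddCommGroup E] [InnerProductSpace ℝ E] [FiniteDimensional ℝ E]

theorem norm_sub_apply_sq_le {ι : Type*} [Fintype ι] (b : OrthonormalBasis ι ℝ E)
    (A B : E →L[ℝ] E) (w : E) :
    ‖A w - B w‖ ^ 2 ≤ ∑ j, ‖w‖ ^ 2 * ‖A.adjoint (b j) - B.adjoint (b j)‖ ^ 2 := by
  rw [← b.sum_sq_norm_inner_right]
  gcongr with j
  rw [← mul_pow, mul_comm]
  gcongr
  rw [inner_sub_right, ← ContinuousLinearMap.adjoint_inner_left,
    ← ContinuousLinearMap.adjoint_inner_left, ← inner_sub_left]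
  exact norm_inner_le_norm _ _

variable [MeasurableSpace E] [BorelSpace E]

theorem exists_integral_norm_fderiv_sub_sq_le {f : E → E} {Ω : Set E} {m : ℝ} (k : ℕ)
    (hf : ContDiff ℝ 1 f) (hfs : HasCompactSupport f) (hΩ : IsOpen Ω) (hm : 0 < m)
    (hfm : ∀ x ∈ Ω, ∀ e, ‖e‖ = 1 → m ≤ ‖(fderiv ℝ f x).adjoint e‖)
    (hweak : ∀ e, ‖e‖ = 1 → ∀ ψ : E → ℝ, ContDiff ℝ 1 ψ → HasCompactSupport ψ → tsupport ψ ⊆ Ω →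
      ∫ x, fderiv ℝ ψ x (‖(fderiv ℝ f x).adjoint e‖ ^ k • (fderiv ℝ f x).adjoint e) = 0)
    {φ : E → ℝ} (hφ : Continuous φ) (hφs : HasCompactSupport φ) (hφΩ : tsupport φ ⊆ Ω) (v w : E) :
    ∃ C : ℝ, ∀ᶠ h : ℝ in 𝓝[>] 0,
      ∫ x, |φ x| * ‖fderiv ℝ f (x + h • v) w - fderiv ℝ f x w‖ ^ 2 ≤ C * h ^ 2 := by
  let b := stdOrthonormalBasis ℝ E
  have cf := hf.continuous_fderiv (by simp)
  have cG : ∀ e, Continuous fun x => (fderiv ℝ f x).adjoint e := fun e =>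
    ((ContinuousLinearMap.adjoint (𝕜 := ℝ) (E := E) (F := E)).continuous.comp cf).clm_apply
      continuous_const
  have h : ∀ j, ∃ C : ℝ, ∀ᶠ h : ℝ in 𝓝[>] 0, ∫ x, |φ x| *
      ‖(fderiv ℝ f (x + h • v)).adjoint (b j) - (fderiv ℝ f x).adjoint (b j)‖ ^ 2 ≤ C * h ^ 2 := by
    intro j
    refine integral_norm_sub_sq_le (u := fun x => ⟪b j, f x⟫) k (fun x => ?_) (cG (b j)) ?_ hΩ hm
      (fun x hx => hfm x hx _ (b.norm_eq_one j)) (hweak _ (b.norm_eq_one j)) hφ hφs hφΩ v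
    · have hd := (hf.differentiable (by simp) x).hasFDerivAt
      have e : innerSL ℝ ((fderiv ℝ f x).adjoint (b j)) = innerSL ℝ (b j) ∘L fderiv ℝ f x := by
        ext y
        simp [ContinuousLinearMap.adjoint_inner_left]
      rw [e]
      exact (innerSL ℝ (b j)).hasFDerivAt.comp x hd
    · refine (hfs.fderiv ℝ).mono fun x hx => ?_
      contrapose! hx
      simp [Function.notMem_support.1 hx]
  choose C hC using h
  refine ⟨∑ j, ‖w‖ ^ 2 * C j, ?_⟩
  filter_upwards [eventually_all.2 hC] with h hh
  have int : ∀ T : E → ℝ, Continuous T → Integrable fun x => |φ x| * T x := fun T hT =>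
    (hφ.abs.mul hT).integrable_of_hasCompactSupport (hφs.norm.mul_right (f := fun x => |φ x|))
  have iG : ∀ j, Integrable fun x => ‖w‖ ^ 2 * (|φ x| *
      ‖(fderiv ℝ f (x + h • v)).adjoint (b j) - (fderiv ℝ f x).adjoint (b j)‖ ^ 2) := fun j =>
    (int _ ((((cG (b j)).comp (continuous_add_const _)).sub (cG (b j))).norm.pow 2)).const_mul _
  calc ∫ x, |φ x| * ‖fderiv ℝ f (x + h • v) w - fderiv ℝ f x w‖ ^ 2
      ≤ ∫ x, ∑ j, ‖w‖ ^ 2 * (|φ x| *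
        ‖(fderiv ℝ f (x + h • v)).adjoint (b j) - (fderiv ℝ f x).adjoint (b j)‖ ^ 2) := by
        refine integral_mono (int _ ?_) (integrable_finsetSum _ fun j _ => iG j) fun x => ?_
        · have c1 := cf.clm_apply (continuous_const (y := w))
          exact ((c1.comp (continuous_add_const (h • v))).sub c1).norm.pow 2
        · refine (mul_le_mul_of_nonneg_left (norm_sub_apply_sq_le b _ _ w)
            (abs_nonneg _)).trans_eq ?_
          rw [Finset.mul_sum]
          exact Finset.sum_congr rfl fun j _ => by ring
    _ = ∑ j, ‖w‖ ^ 2 * ∫ x, |φ x| *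
        ‖(fderiv ℝ f (x + h • v)).adjoint (b j) - (fderiv ℝ f x).adjoint (b j)‖ ^ 2 := by
        rw [integral_finsetSum _ fun j _ => iG j]
        simp only [integral_const_mul]
    _ ≤ ∑ j, ‖w‖ ^ 2 * (C j * h ^ 2) := by
        gcongr with j
        exact hh j
    _ = _ := by
        rw [Finset.sum_mul]
        exact Finset.sum_congr rfl fun j _ => by ring

theorem eventually_conformal_factor_eq {F : E → ℝ} (hF : IsMinkowskiNorm F)
    (hne : ¬IsEuclideanNorm F) {f f' : E → E} {U U' : Set E} {l : E → ℝ} {k : ℕ}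
    (hk : Module.finrank ℝ E = k + 2) (hU : IsOpen U) (hU' : IsOpen U')
    (hf : ContDiffOn ℝ 1 f U) (hf' : ContDiffOn ℝ 1 f' U') (hbij : BijOn f U U')
    (hinv : ∀ x ∈ U, f' (f x) = x) (hl : ∀ x ∈ U, 0 < l x)
    (hconf : ∀ x ∈ U, ∀ v w, ⟪fderiv ℝ f x v, fderiv ℝ f x w⟫ = l x ^ 2 * ⟪v, w⟫)
    (hFf : ∀ x ∈ U, ∀ ξ, F (fderiv ℝ f x ξ) = l x * F ξ) {x₀ : E} (hx₀ : x₀ ∈ U) :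
    ∀ᶠ x in 𝓝 x₀, l x = l x₀ := by
  obtain ⟨r, hr, hrU⟩ := Metric.nhds_basis_closedBall.mem_iff.1 (hU.mem_nhds hx₀)
  have hK := isCompact_closedBall x₀ r
  obtain ⟨η, hη, hηs, hηU, hη1, -⟩ := exists_contDiff_cutoff hK hU hrU
  obtain ⟨e, he⟩ : ∃ e : E, ‖e‖ = 1 := by
    have : Nontrivial E := Module.nontrivial_of_finrank_pos (R := ℝ) (by omega)
    exact exists_norm_eq E zero_le_one
  have hnorm : ∀ x ∈ U, ‖fderiv ℝ f x e‖ = l x := fun x hx => by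
    rw [← sq_eq_sq₀ (norm_nonneg _) (hl x hx).le, ← real_inner_self_eq_norm_sq, hconf x hx,
      real_inner_self_eq_norm_sq, he]
    ring
  obtain ⟨m, hm, hml⟩ : ∃ m, 0 < m ∧ ∀ x ∈ Metric.closedBall x₀ r, m ≤ l x := by
    have hc : ContinuousOn (fun x => ‖fderiv ℝ f x e‖) (Metric.closedBall x₀ r) :=
      (((hf.continuousOn_fderiv_of_isOpen hU (by simp)).mono hrU).clm_apply
        continuousOn_const).norm
    obtain ⟨y, hy, hymin⟩ := hK.exists_isMinOn ⟨x₀, Metric.mem_closedBall_self hr.le⟩ hc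
    refine ⟨l y, hl y (hrU hy), fun x hx => ?_⟩
    rw [← hnorm y (hrU hy), ← hnorm x (hrU hx)]
    exact hymin hx
  set Ω := Metric.ball x₀ r with hΩ
  have hΩo : IsOpen Ω := Metric.isOpen_ball
  have hΩU : Ω ⊆ U := Metric.ball_subset_closedBall.trans hrU
  set p : E → E := fun x => η x • f x with hp
  have hp1 : ContDiff ℝ 1 p := contDiff_smul_of_tsupport_subset hU hη hηU hf
  have hps : HasCompactSupport p := hηs.smul_right
  have hpf : ∀ x ∈ Ω, fderiv ℝ p x = fderiv ℝ f x := fun x hx => by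
    refine Filter.EventuallyEq.fderiv_eq ?_
    filter_upwards [hΩo.mem_nhds hx] with z hz
    simp [hp, hη1.self_of_nhdsSet z (Metric.ball_subset_closedBall hz)]
  set g : E → ℝ := fun x => ‖fderiv ℝ p x e‖ ^ 2 with hgdef
  have hg : Continuous g :=
    (((hp1.continuous_fderiv (by simp)).clm_apply continuous_const).norm.pow 2)
  have hgs : HasCompactSupport g := (hasCompactSupport_fderiv_apply hps e).mono fun x hx => by
    contrapose! hx
    simp [hgdef, Function.notMem_support.1 hx]
  have hgl : ∀ x ∈ Ω, g x = l x ^ 2 := fun x hx => by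
    simp only [hgdef, hpf x hx, hnorm x (hΩU hx)]
  have hx₀Ω : x₀ ∈ Ω := Metric.mem_ball_self hr
  have hgc := eventually_eq_of_integral_fderiv_mul_eq_zero hg hΩo
    (fun φ hφ hφs hφΩ hφ0 v => integral_fderiv_mul_eq_zero hF hne
      (by rw [← Module.finrank_eq_rank, hk]; exact_mod_cast (by omega : 1 < k + 2))
      hp1 hps hg hgs hΩo (fun x hx => hl x (hΩU hx)) hgl
      (fun x hx => by rw [hpf x hx]; exact hconf x (hΩU hx))
      (fun x hx => by rw [hpf x hx]; exact hFf x (hΩU hx)) hφ hφs hφΩ hφ0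
      (exists_integral_norm_fderiv_sub_sq_le k hp1 hps hΩo hm
        (fun x hx e he => by
          rw [hpf x hx, norm_adjoint_apply_of_inner (hl x (hΩU hx)) (hconf x (hΩU hx)), he, mul_one]
          exact hml x (Metric.ball_subset_closedBall hx))
        (fun e he ψ hψ hψs hψΩ => by
          rw [← integral_fderiv_adjoint_eq_zero hk hU hU' hf hf' hbij hinv hl hconf he hψ hψs
            (hψΩ.trans hΩU)]
          refine integral_congr_ae (ae_of_all _ fun x => ?_)
          by_cases hx : x ∈ tsupport ψ
          · simp only [hpf x (hψΩ hx)]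
          · simp [fderiv_of_notMem_tsupport ℝ hx])
        hφ.continuous hφs hφΩ) v) hx₀Ω
  filter_upwards [hgc, hΩo.mem_nhds hx₀Ω] with x hx hxΩ
  rw [hgl x hxΩ, hgl x₀ hx₀Ω] at hx
  exact (sq_eq_sq₀ (hl x (hΩU hxΩ)).le (hl x₀ hx₀).le).1 hx

end LocalConstancy

section Affine

variable {E : Type*} [NormedAddCommGroup E] [InnerProductSpace ℝ E]

/-- The differential of a local similarity has constant inner products between points. -/
theorem inner_fderiv_eq_of_norm_sub {f : E → E} {B : Set E} {c : ℝ} (hB : IsOpen B)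
    (hf : DifferentiableOn ℝ f B) (h : ∀ x ∈ B, ∀ y ∈ B, ‖f x - f y‖ = c * ‖x - y‖) {x y : E}
    (hx : x ∈ B) (hy : y ∈ B) (v w : E) :
    ⟪fderiv ℝ f x v, fderiv ℝ f y w⟫ = c ^ 2 * ⟪v, w⟫ := by
  have df : ∀ x ∈ B, HasFDerivAt f (fderiv ℝ f x) x := fun x hx =>
    ((hf x hx).differentiableAt (hB.mem_nhds hx)).hasFDerivAt
  have h1 : ∀ y ∈ B, ⟪f x - f y, fderiv ℝ f x v⟫ = c ^ 2 * ⟪x - y, v⟫ := by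
    intro y hy
    have d1 := ((df x hx).sub_const (f y)).norm_sq
    have d2 := (((hasFDerivAt_id x).sub_const y).norm_sq).const_mul (c ^ 2)
    have := (d1.congr_of_eventuallyEq (f₁ := fun z => c ^ 2 * ‖id z - y‖ ^ 2) (by
      filter_upwards [hB.mem_nhds hx] with z hz
      rw [h z hz y hy, mul_pow, id])).unique d2
    have := DFunLike.congr_fun this v
    simp only [map_sub, smul_apply, ContinuousLinearMap.comp_apply,
      sub_apply, innerSL_apply_apply, nsmul_eq_mul, Nat.cast_ofNat, id_eq,
      ContinuousLinearMap.id_apply, smul_eq_mul] at this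
    rw [inner_sub_left, inner_sub_left]
    linarith
  have d1 := ((df y hy).const_sub (f x)).inner ℝ (hasFDerivAt_const (fderiv ℝ f x v) y)
  have d2 := (((hasFDerivAt_id y).const_sub x).inner ℝ (hasFDerivAt_const v y)).const_mul (c ^ 2)
  have := (d1.congr_of_eventuallyEq (f₁ := fun z => c ^ 2 * ⟪x - id z, v⟫) (by
    filter_upwards [hB.mem_nhds hy] with z hz
    rw [h1 z hz, id])).unique d2
  have := DFunLike.congr_fun this w
  simp at this
  rw [real_inner_comm, this, real_inner_comm]

theorem norm_apply_of_inner {A : E →L[ℝ] E} {a : ℝ} (ha : 0 < a)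
    (hA : ∀ v w, ⟪A v, A w⟫ = a ^ 2 * ⟪v, w⟫) (v : E) : ‖A v‖ = a * ‖v‖ := by
  rw [← sq_eq_sq₀ (norm_nonneg _) (by positivity), mul_pow, ← real_inner_self_eq_norm_sq, hA,
    real_inner_self_eq_norm_sq]

variable [FiniteDimensional ℝ E]

theorem eventually_fderiv_eq_of_eventually_factor_eq {f f' : E → E} {U U' : Set E} {l : E → ℝ}
    (hU : IsOpen U) (hU' : IsOpen U')
    (hf : ContDiffOn ℝ 1 f U) (hf' : ContDiffOn ℝ 1 f' U') (hbij : BijOn f U U')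
    (hinv : ∀ x ∈ U, f' (f x) = x) (hl : ∀ x ∈ U, 0 < l x)
    (hconf : ∀ x ∈ U, ∀ v w, ⟪fderiv ℝ f x v, fderiv ℝ f x w⟫ = l x ^ 2 * ⟪v, w⟫)
    {x₀ : E} (hx₀ : x₀ ∈ U) (hx₀l : ∀ᶠ x in 𝓝 x₀, l x = l x₀) :
    ∀ᶠ x in 𝓝 x₀, fderiv ℝ f x = fderiv ℝ f x₀ := by
  set c := l x₀ with hc
  have hc0 : 0 < c := hl x₀ hx₀
  have df : ∀ x ∈ U, HasFDerivAt f (fderiv ℝ f x) x := fun x hx =>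
    ((hf.contDiffAt (hU.mem_nhds hx)).differentiableAt (by simp)).hasFDerivAt
  have df' : ∀ y ∈ U', HasFDerivAt f' (fderiv ℝ f' y) y := fun x hx =>
    ((hf'.contDiffAt (hU'.mem_nhds hx)).differentiableAt (by simp)).hasFDerivAt
  obtain ⟨r, hr, hrU⟩ := Metric.mem_nhds_iff.1 (inter_mem (hU.mem_nhds hx₀) hx₀l)
  have hy₀ := hbij.mapsTo hx₀
  have hf'c : ContinuousAt f' (f x₀) := (df' _ hy₀).continuousAt
  obtain ⟨s, hs, hsU⟩ := Metric.mem_nhds_iff.1 (inter_mem (hU'.mem_nhds hy₀)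
    (hf'c.preimage_mem_nhds (by rw [hinv x₀ hx₀]; exact Metric.ball_mem_nhds x₀ hr)))
  obtain ⟨δ, hδ, hδs⟩ := Metric.mem_nhds_iff.1 (inter_mem (Metric.ball_mem_nhds x₀ hr)
    ((df x₀ hx₀).continuousAt.preimage_mem_nhds (Metric.ball_mem_nhds _ hs)))
  have key : ∀ x ∈ Metric.ball x₀ δ, ∀ y ∈ Metric.ball x₀ δ, ‖f x - f y‖ = c * ‖x - y‖ := by
    intro x hx y hy
    refine le_antisymm ?_ ?_
    · refine (convex_ball x₀ r).norm_image_sub_le_of_norm_hasFDerivWithin_le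
        (fun z hz => (df z (hrU hz).1).hasFDerivWithinAt) (fun z hz => ?_) (hδs hy).1 (hδs hx).1
      refine ContinuousLinearMap.opNorm_le_bound _ hc0.le fun v => ?_
      rw [norm_apply_of_inner (hl z (hrU hz).1) (hconf z (hrU hz).1), (hrU hz).2]
    · have := (convex_ball (f x₀) s).norm_image_sub_le_of_norm_hasFDerivWithin_le (C := c⁻¹)
        (fun z hz => (df' z (hsU hz).1).hasFDerivWithinAt) (fun z hz => ?_) (hδs hy).2 (hδs hx).2
      · rw [hinv x (hrU (hδs hx).1).1, hinv y (hrU (hδs hy).1).1] at this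
        rwa [← le_inv_mul_iff₀ hc0]
      · obtain ⟨x, hxU, rfl⟩ := hbij.surjOn (hsU hz).1
        have hxr : x ∈ Metric.ball x₀ r := by
          have := (hsU hz).2
          rwa [mem_preimage, hinv x hxU] at this
        have hcomp : fderiv ℝ f x ∘L fderiv ℝ f' (f x) = ContinuousLinearMap.id ℝ E := by
          have h1 : fderiv ℝ f' (f x) ∘L fderiv ℝ f x = ContinuousLinearMap.id ℝ E := by
            refine ((df' _ (hsU hz).1).comp x (df x hxU)).unique
              ((hasFDerivAt_id x).congr_of_eventuallyEq ?_)
            filter_upwards [hU.mem_nhds hxU] with z hz using hinv z hz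
          have h2 : (fderiv ℝ f' (f x) : E →ₗ[ℝ] E) ∘ₗ (fderiv ℝ f x : E →ₗ[ℝ] E) = .id :=
            congrArg ContinuousLinearMap.toLinearMap h1
          have h3 := (mul_eq_one_comm (M := Module.End ℝ E)).1 h2
          exact ContinuousLinearMap.coe_injective h3
        refine ContinuousLinearMap.opNorm_le_bound _ (by positivity) fun v => ?_
        rw [le_inv_mul_iff₀ hc0, ← show l x = c from (hrU hxr).2,
          ← norm_apply_of_inner (hl x hxU) (hconf x hxU)]
        exact (congrArg norm (DFunLike.congr_fun hcomp v)).le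
  have hx₀δ := Metric.mem_ball_self (x := x₀) hδ
  filter_upwards [Metric.ball_mem_nhds x₀ hδ] with x hx
  have hd : DifferentiableOn ℝ f (Metric.ball x₀ δ) := fun z hz =>
    (df z (hrU (hδs hz).1).1).differentiableAt.differentiableWithinAt
  ext w
  refine sub_eq_zero.1 ((inner_self_eq_zero (𝕜 := ℝ)).1 ?_)
  have e {x y : E} (hx : x ∈ Metric.ball x₀ δ) (hy : y ∈ Metric.ball x₀ δ) (v w : E) :=
    inner_fderiv_eq_of_norm_sub Metric.isOpen_ball hd key hx hy v w
  simp only [inner_sub_left, inner_sub_right]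
  rw [e hx hx, e hx hx₀δ, e hx₀δ hx, e hx₀δ hx₀δ]
  ring

theorem fderiv_eq_of_conformal [MeasurableSpace E] [BorelSpace E] {F : E → ℝ}
    (hF : IsMinkowskiNorm F)
    (hne : ¬IsEuclideanNorm F) {f f' : E → E} {U U' : Set E} {l : E → ℝ}
    (hE : 2 ≤ Module.finrank ℝ E) (hU : IsOpen U) (hUc : IsPreconnected U) (hU' : IsOpen U')
    (hf : ContDiffOn ℝ 1 f U) (hf' : ContDiffOn ℝ 1 f' U') (hbij : BijOn f U U')
    (hinv : ∀ x ∈ U, f' (f x) = x) (hl : ∀ x ∈ U, 0 < l x)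
    (hconf : ∀ x ∈ U, ∀ v w, ⟪fderiv ℝ f x v, fderiv ℝ f x w⟫ = l x ^ 2 * ⟪v, w⟫)
    (hFf : ∀ x ∈ U, ∀ ξ, F (fderiv ℝ f x ξ) = l x * F ξ) {x y : E} (hx : x ∈ U) (hy : y ∈ U) :
    fderiv ℝ f x = fderiv ℝ f y := by
  obtain ⟨k, hk⟩ := Nat.exists_eq_add_of_le' hE
  have hloc : ∀ x₀ ∈ U, ∀ᶠ x in 𝓝 x₀, fderiv ℝ f x = fderiv ℝ f x₀ := fun x₀ hx₀ =>
    eventually_fderiv_eq_of_eventually_factor_eq hU hU' hf hf' hbij hinv hl hconf hx₀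
      (eventually_conformal_factor_eq hF hne hk hU hU' hf hf' hbij hinv hl hconf hFf hx₀)
  have := isPreconnected_iff_preconnectedSpace.1 hUc
  have hlc : IsLocallyConstant fun x : U => fderiv ℝ f x :=
    (IsLocallyConstant.iff_eventually_eq _).2 fun x =>
      continuous_subtype_val.continuousAt.eventually (hloc x x.2)
  exact hlc.apply_eq_of_preconnectedSpace ⟨x, hx⟩ ⟨y, hy⟩

end Affine

section InvariantForm

theorem exists_linearEquiv_inner_eq {W : Type*} [AddCommGroup W] [Module ℝ W]
    [FiniteDimensional ℝ W] (q : W →ₗ[ℝ] W →ₗ[ℝ] ℝ) (hs : ∀ x y, q x y = q y x)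
    (hp : ∀ x, x ≠ 0 → 0 < q x x) :
    ∃ Ψ : W ≃ₗ[ℝ] EuclideanSpace ℝ (Fin (Module.finrank ℝ W)), ∀ x y, ⟪Ψ x, Ψ y⟫ = q x y := by
  let core : InnerProductSpace.Core ℝ W :=
    { inner := fun x y => q x y
      conj_inner_symm := fun x y => hs y x
      re_inner_nonneg := fun x => by
        rcases eq_or_ne x 0 with rfl | hx
        · simp
        · exact (hp x hx).le
      add_left := fun x y z => by simp
      smul_left := fun x y r => by simp
      definite := fun x hx => by
        by_contra h
        exact (hp x h).ne' hx }
  let : NormedAddCommGroup W := core.toNormedAddCommGroup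
  let : InnerProductSpace ℝ W := InnerProductSpace.ofCore core.toCore
  exact ⟨(stdOrthonormalBasis ℝ W).repr.toLinearEquiv,
    fun x y => (stdOrthonormalBasis ℝ W).repr.inner_map_map x y⟩

variable {E : Type*} [NormedAddCommGroup E] [InnerProductSpace ℝ E] [FiniteDimensional ℝ E]

/-- The polar body of a Minkowski norm. -/
def polarBody (F : E → ℝ) : Set E := {p | ∀ ξ, ⟪p, ξ⟫ ≤ F ξ}

theorem IsMinkowskiNorm.isCompact_polarBody {F : E → ℝ} (hF : IsMinkowskiNorm F) :
    IsCompact (polarBody F) := by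
  obtain ⟨hc, h0, hs, ha, hz⟩ := hF
  have hcl : IsClosed (polarBody F) := by
    simp only [polarBody, ofPred_forall]
    exact isClosed_iInter fun ξ => isClosed_le (by fun_prop) continuous_const
  obtain ⟨C, hC⟩ := (isCompact_sphere (0 : E) 1).bddAbove_image hc.continuousOn
  refine Metric.isCompact_of_isClosed_isBounded hcl
    (isBounded_iff_forall_norm_le.2 ⟨max C 0, fun p hp => ?_⟩)
  rcases eq_or_ne p 0 with rfl | hp0
  · simp
  have hpn : 0 < ‖p‖ := norm_pos_iff.2 hp0
  have h1 := hp (‖p‖⁻¹ • p)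
  rw [inner_smul_right, real_inner_self_eq_norm_sq, pow_two, inv_mul_cancel_left₀ hpn.ne'] at h1
  exact h1.trans ((hC ⟨_, by simp [norm_smul, hpn.ne'], rfl⟩).trans (le_max_left _ _))

theorem IsMinkowskiNorm.exists_ball_subset_polarBody {F : E → ℝ} (hF : IsMinkowskiNorm F) :
    ∃ r > 0, Metric.ball 0 r ⊆ polarBody F := by
  obtain ⟨hc, h0, hs, ha, hz⟩ := hF
  obtain ⟨m, hm, hmF⟩ := (isCompact_sphere (0 : E) 1).exists_forall_le' hc.continuousOn
    (a := 0) fun ξ hξ => (h0 ξ).lt_of_ne fun h => by simp [hz ξ h.symm] at hξ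
  refine ⟨m, hm, fun p hp ξ => ?_⟩
  rcases eq_or_ne ξ 0 with rfl | hξ
  · simpa using h0 0
  have hn : 0 < ‖ξ‖ := norm_pos_iff.2 hξ
  have h1 := hmF (‖ξ‖⁻¹ • ξ) (by simp [norm_smul, hn.ne'])
  rw [hs _ (by positivity), le_inv_mul_iff₀ hn] at h1
  have h2 : ‖p‖ ≤ m := by simpa using (mem_ball_zero_iff.1 hp).le
  calc ⟪p, ξ⟫ ≤ ‖p‖ * ‖ξ‖ := real_inner_le_norm p ξ
    _ ≤ m * ‖ξ‖ := by gcongr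
    _ = ‖ξ‖ * m := mul_comm _ _
    _ ≤ F ξ := h1

/-- Every Minkowski norm admits an inner product invariant under all its linear isometries. -/
theorem IsMinkowskiNorm.exists_invariant_form [MeasurableSpace E] [BorelSpace E] {F : E → ℝ}
    (hF : IsMinkowskiNorm F) :
    ∃ q : E →ₗ[ℝ] E →ₗ[ℝ] ℝ, (∀ x y, q x y = q y x) ∧ (∀ x, x ≠ 0 → 0 < q x x) ∧
      ∀ A : E →ₗ[ℝ] E, (∀ ξ, F (A ξ) = F ξ) → ∀ x y, q (A x) (A y) = q x y := by
  have hK := hF.isCompact_polarBody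
  obtain ⟨r, hr, hrK⟩ := hF.exists_ball_subset_polarBody
  have hi (x y : E) : IntegrableOn (fun p => ⟪p, x⟫ * ⟪p, y⟫) (polarBody F) volume :=
    (by fun_prop : Continuous fun p : E => ⟪p, x⟫ * ⟪p, y⟫).continuousOn.integrableOn_compact hK
  refine ⟨LinearMap.mk₂ ℝ (fun x y => ∫ p in polarBody F, ⟪p, x⟫ * ⟪p, y⟫)
    (fun x x' y => ?_) (fun c x y => ?_) (fun x y y' => ?_) (fun c x y => ?_), ?_, ?_, ?_⟩
  · simp_rw [inner_add_right, add_mul]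
    exact integral_add (hi x y) (hi x' y)
  · simp_rw [inner_smul_right, mul_assoc]
    exact integral_const_mul _ _
  · simp_rw [inner_add_right, mul_add]
    exact integral_add (hi x y) (hi x y')
  · simp_rw [inner_smul_right, mul_left_comm _ c]
    exact integral_const_mul _ _
  · intro x y
    simp only [LinearMap.mk₂_apply, mul_comm]
  · intro x hx
    rw [LinearMap.mk₂_apply, setIntegral_pos_iff_support_of_nonneg_ae
      (Eventually.of_forall fun p => mul_self_nonneg _) (hi x x)]
    have ho : IsOpen ({p : E | ⟪p, x⟫ ≠ 0} ∩ Metric.ball 0 r) :=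
      (isOpen_ne_fun (by fun_prop) continuous_const).inter Metric.isOpen_ball
    have hn : 0 < ‖x‖ := norm_pos_iff.2 hx
    refine (ho.measure_pos volume ⟨(r / 2 * ‖x‖⁻¹) • x, ?_, ?_⟩).trans_le
      (measure_mono (inter_subset_inter (fun p hp => mul_self_ne_zero.2 hp) hrK))
    · simp [inner_smul_left, hr.ne', hx]
    · rw [mem_ball_zero_iff, norm_smul, Real.norm_of_nonneg (by positivity), mul_assoc,
        inv_mul_cancel₀ hn.ne']
      linarith
  · intro A hA x y
    have hAi : Function.Injective A := (injective_iff_map_eq_zero A).2 fun ξ h =>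
      hF.2.2.2.2 ξ (by rw [← hA ξ, h]; simpa using hF.2.2.1 0 le_rfl 0)
    have hAs : Function.Surjective A := LinearMap.injective_iff_surjective.1 hAi
    have hpre : A.adjoint ⁻¹' polarBody F = polarBody F := by
      ext p
      simp only [polarBody, mem_preimage, mem_ofPred_eq, LinearMap.adjoint_inner_left]
      refine Iff.trans ?_ hAs.forall.symm
      simp only [hA]
    have hAd : Function.Injective A.adjoint := (injective_iff_map_eq_zero _).2 fun p hp => by
      refine (inner_self_eq_zero (𝕜 := ℝ)).1 ?_
      obtain ⟨z, hz⟩ := hAs p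
      nth_rw 2 [← hz]
      rw [← LinearMap.adjoint_inner_left, hp, inner_zero_left]
    have hdet : LinearMap.det A.adjoint ≠ 0 := by
      rw [← isUnit_iff_ne_zero, ← LinearMap.isUnit_iff_isUnit_det]
      exact (Module.End.isUnit_iff _).2 ⟨hAd, LinearMap.injective_iff_surjective.1 hAd⟩
    have hpos : volume (polarBody F) ≠ 0 :=
      ((Metric.measure_ball_pos volume (0 : E) hr).trans_le (measure_mono hrK)).ne'
    have hone : ENNReal.ofReal |(LinearMap.det A.adjoint)⁻¹| = 1 := by
      have h := Measure.addHaar_preimage_linearMap volume hdet (polarBody F)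
      rw [hpre] at h
      exact ((ENNReal.mul_eq_right hpos hK.measure_lt_top.ne).1 h.symm)
    have hmp : MeasurePreserving A.adjoint (volume : Measure E) volume := by
      refine ⟨(LinearMap.continuous_of_finiteDimensional _).measurable, ?_⟩
      rw [Measure.map_linearMap_addHaar_eq_smul_addHaar volume hdet, hone, one_smul]
    have hme : MeasurableEmbedding A.adjoint :=
      (LinearMap.continuous_of_finiteDimensional _).measurableEmbedding hAd
    simp only [LinearMap.mk₂_apply, ← LinearMap.adjoint_inner_left]
    rw [← hmp.setIntegral_preimage_emb hme (fun p => ⟪p, x⟫ * ⟪p, y⟫), hpre]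

end InvariantForm

section Reduction

variable {V W : Type*} [NormedAddCommGroup V] [NormedSpace ℝ V]
  [NormedAddCommGroup W] [NormedSpace ℝ W]

theorem IsMinkowskiNorm.comp_equiv {F : V → ℝ} (hF : IsMinkowskiNorm F) (e : W ≃L[ℝ] V) :
    IsMinkowskiNorm fun x => F (e x) := by
  obtain ⟨hc, h0, hs, ha, hz⟩ := hF
  refine ⟨hc.comp e.continuous, fun ξ => h0 _, fun c hc ξ => ?_, fun ξ η => ?_, fun ξ h => ?_⟩
  · simp only [map_smul, hs c hc]
  · simpa only [map_add] using ha (e ξ) (e η)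
  · simpa using hz _ h

theorem IsEuclideanNorm.of_comp_equiv {F : V → ℝ} (e : W ≃L[ℝ] V)
    (h : IsEuclideanNorm fun x => F (e x)) : IsEuclideanNorm F := by
  obtain ⟨g, hs, hp, hg⟩ := h
  refine ⟨g.compl₁₂ e.symm.toLinearMap e.symm.toLinearMap, fun ξ η => hs _ _,
    fun ξ hξ => hp _ (by simpa using hξ), fun ξ => ?_⟩
  simpa using hg (e.symm ξ)

variable [FiniteDimensional ℝ V]

theorem IsMinkowskiNorm.exists_invariant_equiv {F : V → ℝ} (hF : IsMinkowskiNorm F) :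
    ∃ Ψ : V ≃L[ℝ] EuclideanSpace ℝ (Fin (Module.finrank ℝ V)), ∀ A : V →ₗ[ℝ] V,
      (∀ ξ, F (A ξ) = F ξ) → ∀ x y, ⟪Ψ (A x), Ψ (A y)⟫ = ⟪Ψ x, Ψ y⟫ := by
  let Φ : V ≃L[ℝ] EuclideanSpace ℝ (Fin (Module.finrank ℝ V)) :=
    ContinuousLinearEquiv.ofFinrankEq (by simp)
  obtain ⟨q, hs, hp, hq⟩ := (hF.comp_equiv Φ.symm).exists_invariant_form
  obtain ⟨Ψ, hΨ⟩ := exists_linearEquiv_inner_eq (q.compl₁₂ Φ.toLinearMap Φ.toLinearMap)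
    (fun x y => hs _ _) fun x hx => hp _ (by simpa using hx)
  refine ⟨Ψ.toContinuousLinearEquiv, fun A hA x y => ?_⟩
  have := hq (Φ.toLinearMap ∘ₗ A ∘ₗ Φ.symm.toLinearMap) (by simp [hA]) (Φ x) (Φ y)
  simpa [hΨ] using this

theorem fderiv_eq_of_minkowski_conformal {F : V → ℝ} (hF : IsMinkowskiNorm F)
    (hne : ¬IsEuclideanNorm F) {f f' : V → V} {U U' : Set V} {l : V → ℝ}
    (hV : 2 ≤ Module.finrank ℝ V) (hU : IsOpen U) (hUc : IsPreconnected U) (hU' : IsOpen U')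
    (hf : ContDiffOn ℝ 1 f U) (hf' : ContDiffOn ℝ 1 f' U') (hbij : BijOn f U U')
    (hinv : ∀ x ∈ U, f' (f x) = x) (hl : ∀ x ∈ U, 0 < l x)
    (hFf : ∀ x ∈ U, ∀ ξ, F (fderiv ℝ f x ξ) = l x * F ξ) {x y : V} (hx : x ∈ U) (hy : y ∈ U) :
    fderiv ℝ f x = fderiv ℝ f y := by
  obtain ⟨Ψ, hΨ⟩ := hF.exists_invariant_equiv
  have hfd (z : EuclideanSpace ℝ (Fin (Module.finrank ℝ V))) :
      fderiv ℝ (Ψ ∘ f ∘ Ψ.symm) z =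
        (Ψ : V →L[ℝ] _) ∘L fderiv ℝ f (Ψ.symm z) ∘L (Ψ.symm : _ →L[ℝ] V) := by
    rw [Ψ.comp_fderiv, Ψ.symm.comp_right_fderiv]
  have hmem {z : EuclideanSpace ℝ (Fin (Module.finrank ℝ V))} {S : Set V} :
      z ∈ Ψ '' S ↔ Ψ.symm z ∈ S := by
    rw [Ψ.image_eq_preimage_symm, mem_preimage]
  have hmaps (S : Set V) : MapsTo Ψ.symm (Ψ '' S) S := fun z hz => hmem.1 hz
  have hinner (z : V) (hz : z ∈ U) (v w : V) :
      ⟪Ψ (fderiv ℝ f z v), Ψ (fderiv ℝ f z w)⟫ = l z ^ 2 * ⟪Ψ v, Ψ w⟫ := by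
    have hlz := hl z hz
    have h := hΨ ((l z)⁻¹ • (fderiv ℝ f z).toLinearMap) (fun ξ => by
      simp only [LinearMap.smul_apply, ContinuousLinearMap.coe_coe]
      rw [hF.2.2.1 _ (by positivity), hFf z hz, inv_mul_cancel_left₀ hlz.ne']) v w
    simp only [LinearMap.smul_apply, ContinuousLinearMap.coe_coe, map_smul, real_inner_smul_left,
      real_inner_smul_right] at h
    rw [← h]
    field_simp
  have key := fderiv_eq_of_conformal (hF.comp_equiv Ψ.symm)
    (fun h => hne (h.of_comp_equiv Ψ.symm)) (f := Ψ ∘ f ∘ Ψ.symm) (f' := Ψ ∘ f' ∘ Ψ.symm)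
    (U := Ψ '' U) (U' := Ψ '' U') (l := l ∘ Ψ.symm) (by simpa using hV)
    (Ψ.toHomeomorph.isOpenMap _ hU) (hUc.image _ Ψ.continuous.continuousOn)
    (Ψ.toHomeomorph.isOpenMap _ hU')
    (Ψ.contDiff.comp_contDiffOn (hf.comp Ψ.symm.contDiff.contDiffOn (hmaps U)))
    (Ψ.contDiff.comp_contDiffOn (hf'.comp Ψ.symm.contDiff.contDiffOn (hmaps U')))
    ⟨fun z hz => mem_image_of_mem _ (hbij.mapsTo (hmem.1 hz)),
      Ψ.injective.comp_injOn (hbij.injOn.comp Ψ.symm.injective.injOn (hmaps U)), ?_⟩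
    (fun z hz => by simp [hinv _ (hmem.1 hz)]) (fun z hz => hl _ (hmem.1 hz))
    (fun z hz v w => by
      rw [hfd]
      simpa using hinner _ (hmem.1 hz) (Ψ.symm v) (Ψ.symm w))
    (fun z hz ξ => by
      rw [hfd]
      simpa using hFf _ (hmem.1 hz) (Ψ.symm ξ))
    (mem_image_of_mem Ψ hx) (mem_image_of_mem Ψ hy)
  · ext v
    rw [hfd, hfd] at key
    simpa using DFunLike.congr_fun key (Ψ v)
  · rintro _ ⟨z, hz, rfl⟩
    obtain ⟨u, hu, rfl⟩ := hbij.surjOn hz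
    exact ⟨Ψ u, mem_image_of_mem _ hu, by simp⟩

end Reduction

/-- Liouville theorem for Minkowski spaces: a conformal `C¹` diffeomorphism between
domains of two non-Euclidean Minkowski spaces of the same dimension `n ≥ 2` is the
restriction of a similarity `x ↦ c·L(x) + b`, where `L` is a linear isometry between
the two Minkowski spaces; in particular the two spaces are linearly isometric. -/
theorem statement7 (n : ℕ) (hn : 2 ≤ n)
    (V₁ V₂ : Type*) [NormedAddCommGroup V₁] [NormedSpace ℝ V₁] [FiniteDimensional ℝ V₁]
    [NormedAddCommGroup V₂] [NormedSpace ℝ V₂] [FiniteDimensional ℝ V₂]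
    (hdim₁ : Module.finrank ℝ V₁ = n) (hdim₂ : Module.finrank ℝ V₂ = n)
    (F₁ : V₁ → ℝ) (F₂ : V₂ → ℝ)
    (hF₁ : IsMinkowskiNorm F₁) (hF₂ : IsMinkowskiNorm F₂)
    (hne₁ : ¬ IsEuclideanNorm F₁) (hne₂ : ¬ IsEuclideanNorm F₂)
    (U₁ : Set V₁) (U₂ : Set V₂)
    (hU₁o : IsOpen U₁) (hU₁c : IsConnected U₁)
    (hU₂o : IsOpen U₂) (hU₂c : IsConnected U₂)
    -- `f : U₁ → U₂` is a `C¹` diffeomorphism, with inverse `f'`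
    (f : V₁ → V₂) (hf : ContDiffOn ℝ 1 f U₁) (hbij : Set.BijOn f U₁ U₂)
    (f' : V₂ → V₁) (hf' : ContDiffOn ℝ 1 f' U₂)
    (hinv : ∀ x ∈ U₁, f' (f x) = x) (hinv' : ∀ y ∈ U₂, f (f' y) = y)
    -- `f` is conformal: `F₂(df_x(ξ)) = λ(x)·F₁(ξ)`
    (lam : V₁ → ℝ) (hlam : ∀ x ∈ U₁, 0 < lam x)
    (hconf : ∀ x ∈ U₁, ∀ ξ, F₂ (fderiv ℝ f x ξ) = lam x * F₁ ξ) :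
    ∃ L : V₁ ≃ₗ[ℝ] V₂, (∀ ξ, F₂ (L ξ) = F₁ ξ) ∧
      ∃ c : ℝ, 0 < c ∧ ∃ b : V₂, ∀ x ∈ U₁, f x = c • L x + b := by
  obtain ⟨x₀, hx₀⟩ := hU₁c.nonempty
  have hc := hlam x₀ hx₀
  set c := lam x₀ with hc_def
  have hinj : Function.Injective (fderiv ℝ f x₀) := (injective_iff_map_eq_zero _).2 fun ξ h => by
    have h1 := hconf x₀ hx₀ ξ
    rw [h, show F₂ 0 = 0 by simpa using hF₂.2.2.1 0 le_rfl 0] at h1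
    exact hF₁.2.2.2.2 ξ ((mul_eq_zero.1 h1.symm).resolve_left hc.ne')
  let D : V₁ ≃L[ℝ] V₂ := (LinearEquiv.ofInjectiveOfFinrankEq (fderiv ℝ f x₀).toLinearMap hinj
    (hdim₁.trans hdim₂.symm)).toContinuousLinearEquiv
  have hD : ∀ ξ, D ξ = fderiv ℝ f x₀ ξ := fun ξ => rfl
  have hFD (η : V₂) : F₁ (D.symm η) = c⁻¹ * F₂ η := by
    rw [eq_inv_mul_iff_mul_eq₀ hc.ne', ← hconf x₀ hx₀, ← hD, D.apply_symm_apply]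
  have hfd (x : V₁) : fderiv ℝ (D.symm ∘ f) x = (D.symm : V₂ →L[ℝ] V₁) ∘L fderiv ℝ f x :=
    D.symm.comp_fderiv
  have hconst : ∀ x ∈ U₁, fderiv ℝ f x = D := by
    intro x hx
    have key := fderiv_eq_of_minkowski_conformal hF₁ hne₁ (f := D.symm ∘ f) (f' := f' ∘ D)
      (U := U₁) (U' := D.symm '' U₂) (l := fun x => c⁻¹ * lam x) (hdim₁ ▸ hn) hU₁o
      hU₁c.isPreconnected (D.symm.toHomeomorph.isOpenMap _ hU₂o)
      (D.symm.contDiff.comp_contDiffOn hf)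
      (hf'.comp D.contDiff.contDiffOn (by rintro _ ⟨z, hz, rfl⟩; simpa using hz))
      ((D.symm.injective.injOn.bijOn_image).comp hbij)
      (fun z hz => by simp [hinv z hz]) (fun z hz => mul_pos (inv_pos.2 hc) (hlam z hz))
      (fun z hz ξ => by
        rw [hfd]
        simp [hFD, hconf z hz, mul_assoc])
      hx hx₀
    rw [hfd, hfd] at key
    ext v
    have := DFunLike.congr_fun key v
    simpa [hD] using this
  refine ⟨D.toLinearEquiv.trans (LinearEquiv.smulOfNeZero ℝ V₂ c⁻¹ (inv_ne_zero hc.ne')),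
    fun ξ => ?_, c, hc, f x₀ - D x₀, fun x hx => ?_⟩
  · simp [hF₂.2.2.1 _ (inv_nonneg.2 hc.le), hD, hconf x₀ hx₀, hc.ne', ← hc_def]
  · have hdf : DifferentiableOn ℝ f U₁ := hf.differentiableOn one_ne_zero
    have h := hU₁o.is_const_of_fderiv_eq_zero hU₁c.isPreconnected
      (f := fun x => f x - D x) (𝕜 := ℝ) (hdf.sub D.differentiable.differentiableOn)
      (fun z hz => by
        rw [fderiv_fun_sub (hdf.differentiableAt (hU₁o.mem_nhds hz)) D.differentiableAt,
          hconst z hz, D.fderiv, sub_self]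
        rfl) hx hx₀
    rw [← h]
    simp [hc.ne']
end

section
/- Let n ≥ 2, let F be a Minkowski norm on Euclidean ℝⁿ, and let Q ∈ O(n) be a fixed orthogonal transformation. For a unit vector v ∈ ℝⁿ let R_v denote the orthogonal reflection across the hyperplane v^⊥, i.e., R_v(ξ) = ξ − 2⟨v,ξ⟩v. If F(Q(R_v(ξ))) = F(ξ) for every unit vector v and every ξ ∈ ℝⁿ, then F is Euclidean: there is a constant c > 0 such that F(ξ) = c·‖ξ‖ for all ξ ∈ ℝⁿ, where ‖·‖ is the standard Euclidean norm. -/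
open scoped RealInnerProductSpace

/-- Two vectors of equal norm are exchanged by a hyperplane reflection; when they coincide,
the hyperplane can still be found as soon as the dimension exceeds one. -/
theorem exists_unit_reflection_eq {E : Type*} [NormedAddCommGroup E] [InnerProductSpace ℝ E]
    (hE : 1 < Module.finrank ℝ E) {ξ η : E} (h : ‖ξ‖ = ‖η‖) :
    ∃ v : E, ‖v‖ = 1 ∧ ξ - (2 * ⟪v, ξ⟫) • v = η := by
  rcases eq_or_ne ξ η with rfl | hne
  · have hbot : (Submodule.span ℝ {ξ})ᗮ ≠ ⊥ := by
      rw [Ne, Submodule.orthogonal_eq_bot_iff]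
      intro htop
      have hle := finrank_span_le_card (R := ℝ) ({ξ} : Set E)
      rw [htop, finrank_top] at hle
      simp at hle
      omega
    obtain ⟨w, hw, hw0⟩ := Submodule.exists_mem_ne_zero_of_ne_bot hbot
    refine ⟨‖w‖⁻¹ • w, norm_smul_inv_norm (𝕜 := ℝ) hw0, ?_⟩
    have hinner : ⟪w, ξ⟫ = 0 := Submodule.mem_orthogonal_singleton_iff_inner_left.mp hw
    simp [real_inner_smul_left, hinner]
  · have hpos : ‖ξ - η‖ ≠ 0 := norm_ne_zero_iff.mpr (sub_ne_zero.mpr hne)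
    refine ⟨‖ξ - η‖⁻¹ • (ξ - η), ?_, ?_⟩
    · rw [norm_smul, norm_inv, norm_norm, inv_mul_cancel₀ hpos]
    · have hinner : 2 * ⟪ξ - η, ξ⟫ = ‖ξ - η‖ ^ 2 := by
        rw [norm_sub_sq_real, inner_sub_left, real_inner_self_eq_norm_sq, ← h,
          real_inner_comm ξ η]
        ring
      have hcoef : 2 * ⟪‖ξ - η‖⁻¹ • (ξ - η), ξ⟫ * ‖ξ - η‖⁻¹ = 1 := by
        rw [real_inner_smul_left]
        field_simp
        exact hinner
      rw [smul_smul, hcoef, one_smul, sub_sub_cancel]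

/-- If a Minkowski norm `F` on Euclidean `ℝⁿ` (`n ≥ 2`) is invariant under all the maps
`Q ∘ R_v`, where `Q` is a fixed orthogonal transformation and `R_v` is the reflection
across the hyperplane `v^⊥` for an arbitrary unit vector `v`, then `F` is Euclidean:
`F = c·‖·‖` for some constant `c > 0`. -/
theorem statement9 (n : ℕ) (hn : 2 ≤ n)
    (F : EuclideanSpace ℝ (Fin n) → ℝ) (hF : IsMinkowskiNorm F)
    (Q : EuclideanSpace ℝ (Fin n) ≃ₗᵢ[ℝ] EuclideanSpace ℝ (Fin n))
    (hinv : ∀ v : EuclideanSpace ℝ (Fin n), ‖v‖ = 1 →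
      ∀ ξ : EuclideanSpace ℝ (Fin n), F (Q (ξ - (2 * ⟪v, ξ⟫) • v)) = F ξ) :
    ∃ c : ℝ, 0 < c ∧ ∀ ξ, F ξ = c * ‖ξ‖ := by
  obtain ⟨-, hnonneg, hhom, -, hzero⟩ := hF
  have hdim : 1 < Module.finrank ℝ (EuclideanSpace ℝ (Fin n)) := by
    rw [finrank_euclideanSpace_fin]
    omega
  have hQ : ∀ ξ η : EuclideanSpace ℝ (Fin n), ‖ξ‖ = ‖η‖ → F (Q η) = F ξ := by
    intro ξ η h
    obtain ⟨v, hv, rfl⟩ := exists_unit_reflection_eq hdim h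
    exact hinv v hv ξ
  have : Nontrivial (EuclideanSpace ℝ (Fin n)) :=
    Module.nontrivial_of_finrank_pos (R := ℝ) (by omega)
  obtain ⟨e, he⟩ := exists_norm_eq (EuclideanSpace ℝ (Fin n)) zero_le_one
  have he0 : e ≠ 0 := by
    rintro rfl
    simp at he
  refine ⟨F e, lt_of_le_of_ne (hnonneg e) fun h => he0 (hzero e h.symm), fun ξ => ?_⟩
  have hnorm : ‖ξ‖ = ‖‖ξ‖ • e‖ := by
    rw [norm_smul, norm_norm, he, mul_one]
  rw [mul_comm, ← hhom _ (norm_nonneg ξ), ← hQ ξ ξ rfl, hQ _ ξ hnorm.symm]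
end

section
/- The composition of a Euclidean isometry and an inversion cannot be conformal for a non-Euclidean Minkowski norm: let n ≥ 2 and let F be a Minkowski norm on ℝⁿ whose Binet–Legendre scalar product g_F equals the standard inner product of ℝⁿ, and assume F is not the standard Euclidean norm. Let c, b ∈ ℝⁿ, r > 0, Q ∈ O(n), and define f(x) = Q(r²·(x−c)/‖x−c‖²) + b. Then for no nonempty open set U ⊆ ℝⁿ∖{c} does there exist a function λ : U → (0,∞) with F(df_x(ξ)) = λ(x)·F(ξ) for all x ∈ U and all ξ ∈ ℝⁿ; i.e., f is not a conformal map of (ℝⁿ, F) on any domain. -/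
open MeasureTheory
open scoped RealInnerProductSpace

section Aux

variable {E : Type*} [NormedAddCommGroup E] [InnerProductSpace ℝ E]

/-- A linear isometry can only rescale a continuous positive function by the factor `1`. -/
theorem scale_factor_eq_one_of_linearIsometryEquiv [FiniteDimensional ℝ E] [Nontrivial E]
    {F : E → ℝ} (hcont : Continuous F) (hpos : ∀ ξ, ξ ≠ 0 → 0 < F ξ) (A : E ≃ₗᵢ[ℝ] E) {μ : ℝ}
    (hA : ∀ ξ, F (A ξ) = μ * F ξ) : μ = 1 := by
  obtain ⟨x, hx, hmax⟩ := (isCompact_sphere (0 : E) 1).exists_isMaxOn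
    (NormedSpace.sphere_nonempty.2 zero_le_one) hcont.continuousOn
  have hx1 : ‖x‖ = 1 := by simpa using hx
  have hFx : 0 < F x := hpos x (by rintro rfl; simp at hx1)
  have h1 : F (A x) ≤ F x := hmax (by simp [hx1])
  have h2 : F (A.symm x) ≤ F x := hmax (by simp [hx1])
  have h3 : 0 < F (A.symm x) := hpos _ (by
    intro h
    have h0 := A.symm.norm_map x
    rw [h, hx1] at h0
    simp at h0)
  have h4 := hA (A.symm x)
  rw [A.apply_symm_apply] at h4
  rw [hA] at h1
  apply le_antisymm
  · nlinarith
  · nlinarith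

theorem exists_mem_inner_ne_zero {V : Set E} (hVo : IsOpen V) (hVne : V.Nonempty) {ξ : E}
    (hξ : ξ ≠ 0) : ∃ v ∈ V, ⟪v, ξ⟫ ≠ 0 := by
  obtain ⟨v, hv⟩ := hVne
  by_contra! h
  have hc : Filter.Tendsto (fun t : ℝ => v + t • ξ) (nhdsWithin 0 {0}ᶜ) (nhds v) := by
    have : Continuous fun t : ℝ => v + t • ξ := by fun_prop
    simpa using (this.tendsto 0).mono_left nhdsWithin_le_nhds
  obtain ⟨t, htV, ht⟩ := ((hc.eventually (hVo.mem_nhds hv)).and self_mem_nhdsWithin).exists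
  have h1 := h _ htV
  rw [inner_add_left, h v hv, inner_smul_left, zero_add] at h1
  simp_all

/-- If `H` composed with the reflection in `v⊥` does not depend on `v`, for `v` in a nonempty open
set, then `H` is constant on spheres. -/
theorem eq_of_norm_eq_of_reflection {H F : E → ℝ} {V : Set E} (hrank : 1 < Module.rank ℝ E)
    (hVo : IsOpen V) (hVne : V.Nonempty)
    (hHF : ∀ v ∈ V, ∀ ξ, H ((ℝ ∙ v)ᗮ.reflection ξ) = F ξ) {x y : E} (hxy : ‖x‖ = ‖y‖) :
    H x = H y := by
  rcases eq_or_ne x 0 with rfl | hx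
  · rw [norm_zero, eq_comm, norm_eq_zero] at hxy
    rw [hxy]
  have hloc : IsLocallyConstant fun z : Metric.sphere (0 : E) ‖x‖ => H z := by
    rw [IsLocallyConstant.iff_eventually_eq]
    rintro ⟨ξ, hξ⟩
    have hξx : ‖ξ‖ = ‖x‖ := by simpa using hξ
    have hξ0 : ξ ≠ 0 := by
      rintro rfl
      exact hx (norm_eq_zero.1 (by simpa using hξx.symm))
    obtain ⟨v, hvV, hv⟩ := exists_mem_inner_ne_zero hVo hVne hξ0
    have hv0 : v ≠ 0 := by rintro rfl; simp at hv
    set η := (ℝ ∙ v)ᗮ.reflection ξ with hη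
    obtain ⟨t, ht, hηt⟩ : ∃ t : ℝ, t ≠ 0 ∧ η - ξ = t • v := by
      refine ⟨-(2 * (⟪v, ξ⟫ / ‖v‖ ^ 2)), ?_, ?_⟩
      · simp [hv, hv0]
      · rw [hη, Submodule.reflection_orthogonal_apply, Submodule.reflection_singleton_apply]
        simp only [RCLike.ofReal_real_eq_id, id]
        module
    have hHξ : H ξ = F η := by
      rw [← hHF v hvV η, hη, Submodule.reflection_reflection]
    have hcont : Continuous fun z : Metric.sphere (0 : E) ‖x‖ => t⁻¹ • (η - (z : E)) := by
      fun_prop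
    have hlim := hcont.tendsto ⟨ξ, hξ⟩
    simp only [hηt, smul_smul, inv_mul_cancel₀ ht, one_smul] at hlim
    filter_upwards [hlim.eventually (hVo.mem_nhds hvV)] with z hz
    have hzx : ‖(z : E)‖ = ‖x‖ := by simp
    have h1 := hHF _ hz η
    have hspan : (ℝ ∙ (t⁻¹ • (η - (z : E)))) = ℝ ∙ (η - (z : E)) :=
      Submodule.span_singleton_smul_eq (IsUnit.mk0 _ (inv_ne_zero ht)) _
    have hr : (ℝ ∙ (t⁻¹ • (η - (z : E))))ᗮ.reflection η = z := by
      simp only [hspan]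
      exact Submodule.reflection_sub (by rw [hη, LinearIsometryEquiv.norm_map, hξx, hzx])
    rw [hr] at h1
    exact h1.trans hHξ.symm
  have : PreconnectedSpace (Metric.sphere (0 : E) ‖x‖) :=
    Subtype.preconnectedSpace (isPreconnected_sphere hrank 0 ‖x‖)
  exact hloc.apply_eq_of_preconnectedSpace ⟨x, by simp⟩ ⟨y, by simp [hxy]⟩

variable [FiniteDimensional ℝ E] [Nontrivial E] [MeasurableSpace E] [BorelSpace E]

theorem setIntegral_ball_norm_sq (μ : Measure E) [μ.IsAddHaarMeasure] {ρ : ℝ} (hρ : 0 < ρ) :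
    ∫ x in Metric.ball (0 : E) ρ, ‖x‖ ^ 2 ∂μ =
      Module.finrank ℝ E / (Module.finrank ℝ E + 2) * ρ ^ 2 * μ.real (Metric.ball 0 ρ) := by
  have hd : 0 < Module.finrank ℝ E := Module.finrank_pos
  have hvol : μ.real (Metric.ball (0 : E) ρ) =
      ρ ^ Module.finrank ℝ E * μ.real (Metric.ball 0 1) := by
    rw [measureReal_def, Measure.addHaar_ball μ 0 hρ.le, ENNReal.toReal_mul,
      ENNReal.toReal_ofReal (by positivity), measureReal_def]
  have hind : ∀ x : E, (Metric.ball (0 : E) ρ).indicator (fun x => ‖x‖ ^ 2) x =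
      (Set.Iio ρ).indicator (fun y : ℝ => y ^ 2) ‖x‖ := by
    intro x
    by_cases hx : ‖x‖ < ρ <;> simp [hx]
  rw [← integral_indicator Metric.isOpen_ball.measurableSet]
  simp_rw [hind]
  rw [integral_fun_norm_addHaar μ ((Set.Iio ρ).indicator fun y : ℝ => y ^ 2), hvol]
  have hrad : ∫ y in Set.Ioi (0 : ℝ),
      y ^ (Module.finrank ℝ E - 1) • (Set.Iio ρ).indicator (fun y : ℝ => y ^ 2) y =
      ρ ^ (Module.finrank ℝ E + 2) / (Module.finrank ℝ E + 2) := by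
    have hfun : ∀ y : ℝ, y ^ (Module.finrank ℝ E - 1) •
        (Set.Iio ρ).indicator (fun y : ℝ => y ^ 2) y =
        (Set.Iio ρ).indicator (fun y : ℝ => y ^ (Module.finrank ℝ E + 1)) y := by
      intro y
      by_cases hy : y < ρ
      · simp only [Set.indicator_apply, Set.mem_Iio, hy, if_true, smul_eq_mul, ← pow_add]
        congr 1
        omega
      · simp [hy]
    simp_rw [hfun]
    rw [setIntegral_indicator measurableSet_Iio, Set.Ioi_inter_Iio, ← integral_Ioc_eq_integral_Ioo,
      ← intervalIntegral.integral_of_le hρ.le, integral_pow]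
    push_cast
    ring_nf
  rw [hrad]
  simp only [nsmul_eq_mul, smul_eq_mul]
  ring

end Aux

/-- The composition of a Euclidean isometry and an inversion cannot be conformal for a
non-Euclidean Minkowski norm: if `F` is a Minkowski norm on `ℝⁿ` (`n ≥ 2`) whose
Binet–Legendre scalar product is the standard inner product (expressed dually: the
Binet–Legendre dual scalar product is the standard dual inner product), and `F` is not
the standard Euclidean norm, then the map `f(x) = Q(r²(x−c)/‖x−c‖²) + b` is not
conformal for `F` on any nonempty open set `U ⊆ ℝⁿ∖{c}`. -/
theorem statement10 (n : ℕ) (hn : 2 ≤ n)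
    (F : EuclideanSpace ℝ (Fin n) → ℝ) (hF : IsMinkowskiNorm F)
    -- the Binet–Legendre scalar product of `F` is the standard inner product
    (hBL : ∀ a b : EuclideanSpace ℝ (Fin n),
      ((n + 2 : ℝ) / (volume {ξ : EuclideanSpace ℝ (Fin n) | F ξ < 1}).toReal) *
        ∫ η in {ξ : EuclideanSpace ℝ (Fin n) | F ξ < 1}, ⟪a, η⟫ * ⟪b, η⟫ = ⟪a, b⟫)
    -- `F` is not the standard Euclidean norm
    (hne : ¬ ∀ ξ, F ξ = ‖ξ‖)
    (c b : EuclideanSpace ℝ (Fin n)) (r : ℝ) (hr : 0 < r)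
    (Q : EuclideanSpace ℝ (Fin n) ≃ₗᵢ[ℝ] EuclideanSpace ℝ (Fin n))
    (f : EuclideanSpace ℝ (Fin n) → EuclideanSpace ℝ (Fin n))
    (hf : ∀ x, f x = Q ((r ^ 2 / ‖x - c‖ ^ 2) • (x - c)) + b)
    (U : Set (EuclideanSpace ℝ (Fin n)))
    (hUo : IsOpen U) (hUne : U.Nonempty) (hUc : U ⊆ {x | x ≠ c}) :
    ¬ ∃ lam : EuclideanSpace ℝ (Fin n) → ℝ, (∀ x ∈ U, 0 < lam x) ∧
      ∀ x ∈ U, ∀ ξ, F (fderiv ℝ f x ξ) = lam x * F ξ := by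
  rintro ⟨lam, -, hconf⟩
  obtain ⟨hcont, hnn, hhom, -, hzero⟩ := hF
  have hpos : ∀ ξ, ξ ≠ 0 → 0 < F ξ := fun ξ hξ =>
    lt_of_le_of_ne (hnn ξ) fun h => hξ (hzero ξ h.symm)
  have hrank : 1 < Module.rank ℝ (EuclideanSpace ℝ (Fin n)) := by
    rw [← Module.finrank_eq_rank, finrank_euclideanSpace_fin]
    exact_mod_cast hn
  have : Nontrivial (EuclideanSpace ℝ (Fin n)) :=
    rank_pos_iff_nontrivial.1 (zero_lt_one.trans hrank)
  have hf' : f = fun x => Q (EuclideanGeometry.inversion c r x - c) + b := by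
    funext x
    rw [hf, EuclideanGeometry.inversion_def]
    simp [dist_eq_norm, div_pow]
  have hinv : ∀ x ∈ U, ∀ ξ, F (Q ((ℝ ∙ (x - c))ᗮ.reflection ξ)) = F ξ := by
    intro x hx ξ
    have hxc : x ≠ c := hUc hx
    have hd : 0 < (r / dist x c) ^ 2 := pow_pos (div_pos hr (dist_pos.2 hxc)) 2
    have hder := ((Q : EuclideanSpace ℝ (Fin n) →L[ℝ] EuclideanSpace ℝ (Fin n)).hasFDerivAt.comp x
      ((EuclideanGeometry.hasFDerivAt_inversion (R := r) hxc).sub_const c)).add_const b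
    have hfd : HasFDerivAt f _ x := hf' ▸ hder
    have key : ∀ ζ, F (((ℝ ∙ (x - c))ᗮ.reflection.trans Q) ζ) =
        (lam x / (r / dist x c) ^ 2) * F ζ := by
      intro ζ
      have h := hconf x hx ζ
      rw [hfd.fderiv] at h
      have h2 : F ((r / dist x c) ^ 2 • Q ((ℝ ∙ (x - c))ᗮ.reflection ζ)) = lam x * F ζ := by
        simpa using h
      rw [hhom _ hd.le] at h2
      rw [LinearIsometryEquiv.trans_apply, div_mul_eq_mul_div, eq_div_iff hd.ne', ← h2, mul_comm]
    have h1 := scale_factor_eq_one_of_linearIsometryEquiv hcont hpos _ key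
    have h2 := key ξ
    rwa [h1, one_mul] at h2
  have hsphere : ∀ x y, ‖x‖ = ‖y‖ → F x = F y := by
    intro x y hxy
    have hVo : IsOpen ((fun v => v + c) ⁻¹' U) := hUo.preimage (by fun_prop)
    have hVne : ((fun v => v + c) ⁻¹' U).Nonempty := by
      obtain ⟨u, hu⟩ := hUne
      exact ⟨u - c, by simpa using hu⟩
    have h := eq_of_norm_eq_of_reflection (H := fun z => F (Q z)) (F := F) hrank hVo hVne
      (fun v hv ξ => by simpa using hinv _ hv ξ) (x := Q.symm x) (y := Q.symm y) (by simpa using hxy)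
    simpa using h
  obtain ⟨e, he⟩ := exists_norm_eq (EuclideanSpace ℝ (Fin n)) zero_le_one
  have hk : 0 < F e := hpos e (by rintro rfl; simp at he)
  have hFk : ∀ ξ, F ξ = F e * ‖ξ‖ := by
    intro ξ
    rw [hsphere ξ (‖ξ‖ • e) (by simp [norm_smul, he]), hhom _ (norm_nonneg _), mul_comm]
  have hball : {ξ : EuclideanSpace ℝ (Fin n) | F ξ < 1} = Metric.ball 0 (F e)⁻¹ := by
    ext ξ
    rw [Set.mem_ofPred_eq, hFk, mem_ball_zero_iff, ← lt_div_iff₀' hk, one_div]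
  rw [hball] at hBL
  have hρ : 0 < (F e)⁻¹ := inv_pos.2 hk
  have hvol : 0 < volume.real (Metric.ball (0 : EuclideanSpace ℝ (Fin n)) (F e)⁻¹) :=
    ENNReal.toReal_pos (Metric.measure_ball_pos _ _ hρ).ne' measure_ball_lt_top.ne
  have hint : ∫ η in Metric.ball (0 : EuclideanSpace ℝ (Fin n)) (F e)⁻¹, ‖η‖ ^ 2 =
      ∑ i, ∫ η in Metric.ball (0 : EuclideanSpace ℝ (Fin n)) (F e)⁻¹,
        ⟪EuclideanSpace.basisFun (Fin n) ℝ i, η⟫ * ⟪EuclideanSpace.basisFun (Fin n) ℝ i, η⟫ := by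
    rw [← integral_finsetSum]
    · refine integral_congr_ae (Filter.Eventually.of_forall fun η => ?_)
      simp only [← pow_two]
      exact ((EuclideanSpace.basisFun (Fin n) ℝ).sum_sq_inner_right η).symm
    · intro i _
      have hc : Continuous fun η => ⟪EuclideanSpace.basisFun (Fin n) ℝ i, η⟫ *
        ⟪EuclideanSpace.basisFun (Fin n) ℝ i, η⟫ := by fun_prop
      exact (hc.continuousOn.integrableOn_compact (isCompact_closedBall 0 (F e)⁻¹)).mono_set
        Metric.ball_subset_closedBall
  have hsum : ((n + 2 : ℝ) / volume.real (Metric.ball (0 : EuclideanSpace ℝ (Fin n)) (F e)⁻¹)) *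
      ∫ η in Metric.ball (0 : EuclideanSpace ℝ (Fin n)) (F e)⁻¹, ‖η‖ ^ 2 = n := by
    rw [hint, Finset.mul_sum]
    simp only [measureReal_def, hBL, OrthonormalBasis.inner_eq_one]
    simp
  rw [setIntegral_ball_norm_sq volume hρ, finrank_euclideanSpace_fin] at hsum
  have hn0 : (0 : ℝ) < n := by exact_mod_cast (by omega : 0 < n)
  have hsq : (F e)⁻¹ ^ 2 = 1 := by
    generalize volume.real (Metric.ball (0 : EuclideanSpace ℝ (Fin n)) (F e)⁻¹) = v at hsum hvol
    generalize (F e)⁻¹ = ρ at hsum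
    field_simp at hsum
    exact hsum
  have hone : F e = 1 := inv_eq_one.1 ((pow_eq_one_iff_of_nonneg hρ.le two_ne_zero).1 hsq)
  exact hne fun ξ => by rw [hFk, hone, one_mul]
end

section
/- Let U ⊆ ℝⁿ be an open set with 0 ∈ U and let F : U × ℝⁿ → ℝ be a continuous Finsler metric on U (each F(x,·) a Minkowski norm). Let Q ∈ O(n) and 0 < a < 1, and set f(x) = a·Q(x). Assume f(U) ⊆ U and that f is a similarity for F with dilation constant a, i.e., F(a·Q(x), a·Q(ξ)) = a·F(x,ξ) for all x ∈ U and ξ ∈ ℝⁿ. Then F is independent of the base point: F(x,ξ) = F(0,ξ) for all x ∈ U and all ξ ∈ ℝⁿ; that is, F is the restriction of a Minkowski metric. -/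
/-- If a continuous Finsler metric `F` on an open set `U ∋ 0` of `ℝⁿ` admits the
linear contraction `f(x) = a·Q(x)` (`Q ∈ O(n)`, `0 < a < 1`, `f(U) ⊆ U`) as a
similarity with dilation constant `a`, then `F` is independent of the base point:
`F(x,ξ) = F(0,ξ)`, i.e. `F` is the restriction of a Minkowski metric. -/
theorem statement11 (n : ℕ)
    (U : Set (EuclideanSpace ℝ (Fin n))) (hU : IsOpen U) (h0 : (0 : EuclideanSpace ℝ (Fin n)) ∈ U)
    (F : EuclideanSpace ℝ (Fin n) → EuclideanSpace ℝ (Fin n) → ℝ)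
    (hFcont : ContinuousOn (fun p : EuclideanSpace ℝ (Fin n) × EuclideanSpace ℝ (Fin n) =>
      F p.1 p.2) (U ×ˢ (Set.univ : Set (EuclideanSpace ℝ (Fin n)))))
    (hFmink : ∀ x ∈ U, IsMinkowskiNorm (F x))
    (Q : EuclideanSpace ℝ (Fin n) ≃ₗᵢ[ℝ] EuclideanSpace ℝ (Fin n))
    (a : ℝ) (ha0 : 0 < a) (ha1 : a < 1)
    (hmaps : ∀ x ∈ U, a • Q x ∈ U)
    (hsim : ∀ x ∈ U, ∀ ξ : EuclideanSpace ℝ (Fin n),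
      F (a • Q x) (a • Q ξ) = a * F x ξ) :
    ∀ x ∈ U, ∀ ξ : EuclideanSpace ℝ (Fin n), F x ξ = F 0 ξ := by
  have step : ∀ x ∈ U, ∀ ξ, F (a • Q x) (Q ξ) = F x ξ := fun x hx ξ => by
    have h := hsim x hx ξ
    rw [(hFmink _ (hmaps x hx)).2.2.1 a ha0.le] at h
    exact mul_left_cancel₀ ha0.ne' h
  have iter : ∀ k : ℕ, ∀ x ∈ U, ∀ ξ,
      (fun y => a • Q y)^[k] x ∈ U ∧ F ((fun y => a • Q y)^[k] x) (Q^[k] ξ) = F x ξ := by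
    intro k x hx ξ
    induction k with
    | zero => exact ⟨hx, rfl⟩
    | succ k ih =>
      simp only [Function.iterate_succ_apply']
      exact ⟨hmaps _ ih.1, (step _ ih.1 _).trans ih.2⟩
  have norm_iter : ∀ (k : ℕ) (x : EuclideanSpace ℝ (Fin n)),
      ‖(fun y => a • Q y)^[k] x‖ = a ^ k * ‖x‖ := by
    intro k x
    induction k with
    | zero => simp
    | succ k ih =>
      rw [Function.iterate_succ_apply', norm_smul, Q.norm_map, ih, Real.norm_of_nonneg ha0.le,
        pow_succ]
      ring
  have norm_iter_Q : ∀ (k : ℕ) (ξ : EuclideanSpace ℝ (Fin n)), ‖Q^[k] ξ‖ = ‖ξ‖ := by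
    intro k ξ
    induction k with
    | zero => rfl
    | succ k ih => rw [Function.iterate_succ_apply', Q.norm_map, ih]
  intro x hx ξ
  -- The orbit of `ξ` under `Q` is bounded, hence accumulates at some `η`.
  obtain ⟨η, -, φ, hφ, hη⟩ :=
    (isCompact_closedBall (0 : EuclideanSpace ℝ (Fin n)) ‖ξ‖).tendsto_subseq
    (x := fun k => Q^[k] ξ) fun k => by simp [norm_iter_Q]
  have key : ∀ y ∈ U, F y ξ = F 0 η := fun y hy => by
    have hy0 : Filter.Tendsto (fun k => (fun z => a • Q z)^[k] y) Filter.atTop (nhds 0) := by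
      rw [tendsto_zero_iff_norm_tendsto_zero]
      simp only [norm_iter]
      simpa using (tendsto_pow_atTop_nhds_zero_of_lt_one ha0.le ha1).mul_const ‖y‖
    have hlim := (hFcont (0, η) ⟨h0, trivial⟩).tendsto.comp
      (tendsto_nhdsWithin_iff.2 ⟨(hy0.comp hφ.tendsto_atTop).prodMk_nhds hη,
        Filter.Eventually.of_forall fun k => ⟨(iter (φ k) y hy ξ).1, trivial⟩⟩)
    exact tendsto_nhds_unique
      (tendsto_const_nhds.congr fun k => ((iter (φ k) y hy ξ).2).symm) hlim
  rw [key x hx, key 0 h0]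
end

section
/- Let Q ∈ O(n), b ∈ ℝⁿ, and suppose the affine map f(x) = Q(x) + b has no fixed point in ℝⁿ. Then there exists a vector v₀ ∈ ℝⁿ such that, with T(x) = x + v₀, the conjugate satisfies (T⁻¹ ∘ f ∘ T)(x) = Q(x) + b₁ for some vector b₁ ∈ ℝⁿ with Q(b₁) = b₁ and b₁ ≠ 0. -/
/-- A vector orthogonal to the range of `1 - Q`, for a linear isometry `Q`, is fixed by `Q`. -/
theorem LinearIsometry.apply_eq_self_of_mem_orthogonal_range_one_sub {E : Type*}
    [NormedAddCommGroup E] [InnerProductSpace ℝ E] (Q : E →ₗᵢ[ℝ] E) {w : E}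
    (hw : w ∈ (LinearMap.range (LinearMap.id - Q.toLinearMap))ᗮ) : Q w = w := by
  have h : inner ℝ (w - Q w) w = 0 :=
    (Submodule.mem_orthogonal _ _).1 hw _ ⟨w, by simp⟩
  rw [inner_sub_left, real_inner_self_eq_norm_sq] at h
  have h2 := norm_sub_sq_real (Q w) w
  rw [Q.norm_map] at h2
  have h3 : ‖Q w - w‖ ^ 2 = 0 := by linarith
  exact sub_eq_zero.1 (norm_eq_zero.1 (pow_eq_zero_iff two_ne_zero |>.1 h3))

/-- If the affine map `f(x) = Q(x) + b` (`Q ∈ O(n)`) has no fixed point in `ℝⁿ`, then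
conjugating by a suitable translation `T(x) = x + v₀` yields
`(T⁻¹ ∘ f ∘ T)(x) = Q(x) + b₁` with `Q(b₁) = b₁` and `b₁ ≠ 0`. -/
theorem statement12 (n : ℕ)
    (Q : EuclideanSpace ℝ (Fin n) ≃ₗᵢ[ℝ] EuclideanSpace ℝ (Fin n))
    (b : EuclideanSpace ℝ (Fin n))
    (hnofix : ∀ x : EuclideanSpace ℝ (Fin n), Q x + b ≠ x) :
    ∃ v₀ b₁ : EuclideanSpace ℝ (Fin n), Q b₁ = b₁ ∧ b₁ ≠ 0 ∧
      ∀ x : EuclideanSpace ℝ (Fin n), (Q (x + v₀) + b) - v₀ = Q x + b₁ := by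
  obtain ⟨y, ⟨v, rfl⟩, w, hw, hb⟩ :=
    (LinearMap.range (LinearMap.id - Q.toLinearIsometry.toLinearMap)).exists_add_mem_mem_orthogonal b
  have hb' : b = v - Q v + w := by simpa using hb
  refine ⟨v, w, Q.toLinearIsometry.apply_eq_self_of_mem_orthogonal_range_one_sub hw, ?_, ?_⟩
  · rintro rfl
    exact hnofix v (by rw [hb']; abel)
  · intro x
    rw [hb', map_add]
    abel
end

section
/- A uniform limit of flat metrics is flat: let X be a nonempty set, let d and d_m (m ∈ ℕ) be metrics on X such that d_m converges to d uniformly, i.e., sup_{x,y ∈ X} |d_m(x,y) − d(x,y)| → 0 as m → ∞, and suppose (X,d) is compact. If for every m there exists an isometric embedding φ_m : (X,d_m) → ℝⁿ (Euclidean), i.e., ‖φ_m(x) − φ_m(y)‖ = d_m(x,y) for all x,y ∈ X, then there exists an isometric embedding φ : (X,d) → ℝⁿ, i.e., ‖φ(x) − φ(y)‖ = d(x,y) for all x,y ∈ X. -/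
open Filter Topology

/-- Along an ultrafilter, a family in a proper metric space whose distance to a fixed point
converges has a limit. -/
theorem Ultrafilter.exists_tendsto_of_tendsto_dist {ι E : Type*} [PseudoMetricSpace E]
    [ProperSpace E] (U : Ultrafilter ι) {g : ι → E} {c : E} {r : ℝ}
    (h : Tendsto (fun i => dist (g i) c) U (𝓝 r)) : ∃ a, Tendsto g U (𝓝 a) := by
  have hball : ∀ᶠ i in (U : Filter ι), g i ∈ Metric.closedBall c (r + 1) :=
    h.eventually_le_const (lt_add_one r)
  obtain ⟨a, -, ha⟩ := (isCompact_closedBall c (r + 1)).ultrafilter_le_nhds (U.map g)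
    (le_principal_iff.2 hball)
  exact ⟨a, ha⟩

/-- If the distances induced by maps into a proper normed group converge pointwise to `dist`,
then the limit metric is also induced by a map into that group. -/
theorem exists_norm_sub_eq_dist_of_tendsto {ι X E : Type*} [PseudoMetricSpace X]
    [SeminormedAddCommGroup E] [ProperSpace E] {l : Filter ι} [l.NeBot] (f : ι → X → E)
    (h : ∀ x y, Tendsto (fun i => ‖f i x - f i y‖) l (𝓝 (dist x y))) :
    ∃ ψ : X → E, ∀ x y, ‖ψ x - ψ y‖ = dist x y := by
  rcases isEmpty_or_nonempty X with hX | ⟨⟨x₀⟩⟩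
  · exact ⟨fun _ => 0, fun x => hX.elim x⟩
  have hU (x y : X) := (h x y).mono_left (Ultrafilter.of_le l)
  choose ψ hψ using fun x => (Ultrafilter.of l).exists_tendsto_of_tendsto_dist
    (g := fun i => f i x - f i x₀) (c := 0) (by simpa using hU x x₀)
  refine ⟨ψ, fun x y => tendsto_nhds_unique ((hψ x).sub (hψ y)).norm ?_⟩
  simpa using hU x y

/-- A uniform limit of flat metrics is flat: if `(X, dist)` is a nonempty compact
metric space, `d_m` are metrics on `X` converging uniformly to `dist`, and each
`(X, d_m)` embeds isometrically into Euclidean `ℝⁿ`, then `(X, dist)` embeds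
isometrically into Euclidean `ℝⁿ`. -/
theorem statement13 (n : ℕ) (X : Type*) [Nonempty X] [MetricSpace X] [CompactSpace X]
    (d : ℕ → X → X → ℝ)
    (hnonneg : ∀ m x y, 0 ≤ d m x y)
    (hsymm : ∀ m x y, d m x y = d m y x)
    (heq : ∀ m x y, d m x y = 0 ↔ x = y)
    (htriangle : ∀ m x y z, d m x z ≤ d m x y + d m y z)
    (hconv : ∀ ε : ℝ, 0 < ε → ∃ N : ℕ, ∀ m ≥ N, ∀ x y : X, |d m x y - dist x y| ≤ ε)
    (φ : ℕ → X → EuclideanSpace ℝ (Fin n))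
    (hφ : ∀ m x y, ‖φ m x - φ m y‖ = d m x y) :
    ∃ ψ : X → EuclideanSpace ℝ (Fin n), ∀ x y : X, ‖ψ x - ψ y‖ = dist x y := by
  refine exists_norm_sub_eq_dist_of_tendsto (l := atTop) φ fun x y => ?_
  simp only [hφ]
  refine Metric.tendsto_atTop.2 fun ε hε => ?_
  obtain ⟨N, hN⟩ := hconv (ε / 2) (half_pos hε)
  exact ⟨N, fun m hm => (hN m hm x y).trans_lt (half_lt_self hε)⟩
end

section
/- A holomorphic map sending parallel lines to parallel lines is affine: let U ⊆ ℂ be open and connected, f : U → ℂ holomorphic, and u, u' ∈ ℂ∖{0}. Suppose that for all z, w ∈ U with w − z ∈ ℝ·u and the straight segment from z to w contained in U, one has f(w) − f(z) ∈ ℝ·u'. Then there exist a, b ∈ ℂ such that f(z) = a·z + b for all z ∈ U. -/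
/-- If every increment `f (z + t * u) - f z` for small real `t` is a real multiple of `u'`,
then `deriv f z * u / u'` is real. -/
theorem im_deriv_mul_div_eq_zero {f : ℂ → ℂ} {z u u' : ℂ} (hu' : u' ≠ 0)
    (hf : DifferentiableAt ℂ f z)
    (h : ∀ᶠ t : ℝ in nhds 0, ∃ s : ℝ, f (z + t * u) - f z = s * u') :
    (deriv f z * u / u').im = 0 := by
  have hline : HasDerivAt (fun t : ℝ => z + (t : ℂ) * u) u 0 := by
    simpa using ((Complex.ofRealCLM.hasDerivAt (x := (0 : ℝ))).mul_const u).const_add z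
  have hcomp : HasDerivAt (fun t : ℝ => f (z + t * u)) (deriv f z * u) 0 := by
    have hfz : HasDerivAt f (deriv f z) (z + ((0 : ℝ) : ℂ) * u) := by
      simpa using hf.hasDerivAt
    exact hfz.comp (0 : ℝ) hline
  have him : HasDerivAt (fun t : ℝ => (f (z + t * u) / u').im) (deriv f z * u / u').im 0 :=
    Complex.imCLM.hasFDerivAt.comp_hasDerivAt (0 : ℝ) (hcomp.div_const u')
  refine him.unique ((hasDerivAt_const (0 : ℝ) (f z / u').im).congr_of_eventuallyEq ?_)
  filter_upwards [h] with t ⟨s, hs⟩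
  have hquot : f (z + t * u) / u' = f z / u' + s := by
    field_simp
    linear_combination hs
  simp [hquot]

/-- A holomorphic map on a connected open set `U ⊆ ℂ` that sends (segments of) lines
parallel to a fixed direction `u ≠ 0` to lines parallel to a fixed direction `u' ≠ 0`
is affine: `f(z) = a·z + b`. -/
theorem statement14 (U : Set ℂ) (hUo : IsOpen U) (hUc : IsConnected U)
    (f : ℂ → ℂ) (hf : DifferentiableOn ℂ f U)
    (u u' : ℂ) (hu : u ≠ 0) (hu' : u' ≠ 0)
    (hlines : ∀ z ∈ U, ∀ w ∈ U, (∃ t : ℝ, w - z = (t : ℂ) * u) →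
      segment ℝ z w ⊆ U → ∃ s : ℝ, f w - f z = (s : ℂ) * u') :
    ∃ a b : ℂ, ∀ z ∈ U, f z = a * z + b := by
  have him : ∀ z ∈ U, (deriv f z * u / u').im = 0 := by
    intro z hz
    refine im_deriv_mul_div_eq_zero hu' (hf.differentiableAt (hUo.mem_nhds hz)) ?_
    obtain ⟨r, hr, hball⟩ := Metric.isOpen_iff.1 hUo z hz
    have hcont : Continuous fun t : ℝ => z + (t : ℂ) * u := by fun_prop
    have hnear : ∀ᶠ t : ℝ in nhds 0, z + (t : ℂ) * u ∈ Metric.ball z r :=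
      hcont.continuousAt.eventually_mem (by simpa using Metric.ball_mem_nhds z hr)
    filter_upwards [hnear] with t ht
    exact hlines z hz _ (hball ht) ⟨t, by ring⟩
      (((convex_ball z r).segment_subset (Metric.mem_ball_self hr) ht).trans hball)
  have hderiv : DifferentiableOn ℂ (fun z => deriv f z * u / u') U :=
    ((hf.deriv hUo).mul_const u).div_const u'
  obtain ⟨c, hc⟩ := (hderiv.analyticOnNhd hUo).eq_const_of_im_eq_const him hUo hUc
  have heq : U.EqOn (deriv f) (deriv fun z => c * u' / u * z) := by
    intro z hz
    have hcz : deriv f z * u / u' = c := hc z hz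
    rw [deriv_const_mul_id', ← hcz]
    field_simp
  obtain ⟨b, hb⟩ := hUo.exists_eq_add_of_deriv_eq hUc.isPreconnected hf (by fun_prop) heq
  exact ⟨c * u' / u, b, hb⟩
end
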